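/- Let S(X) denote the number of integers q ≤ X with q ≡ 1 (mod 4) for which the Erdős conjecture holds mod q. Then liminf_{X→∞} S(X)/(X/4) ≥ 0.78. -/

import Mathlib

open Filter Topology Finset

/-- `f : ℕ → ℤ` is Erdősian mod `q`: periodic with period `q`, takes values `±1`
off multiples of `q`, and `0` on multiples of `q`. -/
def IsErdosian (q : ℕ) (f : ℕ → ℤ) : Prop :=
  (∀ n : ℕ, 1 ≤ n → f (n + q) = f n) ∧
  (∀ n : ℕ, 1 ≤ n → ¬ q ∣ n → f n = 1 ∨ f n = -1) ∧
  (∀ n : ℕ, 1 ≤ n → q ∣ n → f n = 0)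

/-- The Erdős conjecture is false mod `q`: there is an Erdősian function mod `q`
whose partial sums `∑_{n=1}^N f(n)/n` tend to `0`. -/
def ErdosConjectureFalse (q : ℕ) : Prop :=
  ∃ f : ℕ → ℤ, IsErdosian q f ∧
    Tendsto (fun N : ℕ => ∑ n ∈ Finset.Icc 1 N, (f n : ℝ) / n) atTop (nhds 0)

/-- The Erdős conjecture holds (is true) mod `q`. -/
def ErdosConjectureHolds (q : ℕ) : Prop := ¬ ErdosConjectureFalse q

/-!
Write `ψ` for a faithful additive character of `ZMod q`. If `∑ f n / n = 0`, then expanding `f` in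
the characters `k ↦ ψ (j k)` and applying Abel's theorem yields a linear relation, with coefficients
in the cyclotomic field, between values of `log (1 - ζ)` at `q`-th roots of unity `ζ ≠ 1`.
Such a relation survives every Galois conjugation of its coefficients. This is the qualitative
content of Baker's theorem, and is shown by an auxiliary function argument: the traces of the
relation against an integral basis give exponential monomials, all of whose logarithmic derivatives
are combinations of only as many algebraic ones as there are nonvanishing conjugates. If some
conjugates vanish and some do not, Siegel's lemma, Schwarz's lemma and the product formula are
incompatible. Conjugation replaces `f n` by `f (u * n)`, so the corresponding sum vanishes for
every unit `u` of `ZMod q`.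

Project `f` to the Dirichlet characters `χ` of `(ZMod q)ˣ`. The Dirichlet series of each component
is `L(s, χ)` times a series over the integers composed of primes dividing `q`, and `L(1, χ) ≠ 0`.
Summing over `χ`, the series `∑ f n / n ^ s` over the integers composed of primes dividing `q`
tends to `0` as `s → 1`. Its term at `n = 1` has absolute value `1`, so the others add up to at
least `1` in absolute value, and therefore `2 ≤ ∑ 1 / n = ∏_{p ∣ q} (1 - 1 / p)⁻¹ = q / φ(q)`.

For odd `q` this forces either `15 ∣ q` or many prime factors `p ≥ 7`, and Markov's inequality for
`∑_{p ∣ q, p ≥ 7} 1 / (p - 1)` shows that few `q ≡ 1 (mod 4)` are of this kind.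
-/

open NumberField

/-! ### Zeros of entire functions -/

section EntireFunctions

variable {g : ℂ → ℂ} {P : Finset ℂ} {r R B : ℝ} {s : ℕ}

lemma one_le_analyticOrderAt_iff_apply_eq_zero {c : ℂ} (hg : AnalyticAt ℂ g c) :
    1 ≤ analyticOrderAt g c ↔ g c = 0 := by
  rw [Order.one_le_iff_ne_zero, Ne, hg.analyticOrderAt_eq_zero, not_not]

lemma analyticOrderAt_sub_const_pow_self (c : ℂ) (s : ℕ) :
    analyticOrderAt (fun z : ℂ => (z - c) ^ s) c = s :=
  (AnalyticAt.analyticOrderAt_eq_natCast (by fun_prop)).mpr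
    ⟨fun _ => 1, by fun_prop, by simp, by simp⟩

lemma exists_eq_sub_mul_of_apply_eq_zero (hg : Differentiable ℂ g) {c : ℂ} (hc : g c = 0) :
    ∃ h : ℂ → ℂ, Differentiable ℂ h ∧ ∀ z, g z = (z - c) * h z := by
  refine ⟨dslope g c, ?_, fun z => ?_⟩
  · exact differentiableOn_univ.mp <|
      (Complex.differentiableOn_dslope Filter.univ_mem).mpr hg.differentiableOn
  · simpa [hc] using (sub_smul_dslope g c z).symm

lemma exists_eq_sub_pow_mul_of_le_analyticOrderAt (hg : Differentiable ℂ g) {c : ℂ}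
    (hs : s ≤ analyticOrderAt g c) :
    ∃ h : ℂ → ℂ, Differentiable ℂ h ∧ ∀ z, g z = (z - c) ^ s * h z := by
  induction s with
  | zero => exact ⟨g, hg, by simp⟩
  | succ s ih =>
    obtain ⟨h, hh, hgh⟩ := ih (le_trans (mod_cast s.le_succ) hs)
    have horder : analyticOrderAt g c = s + analyticOrderAt h c := by
      rw [show g = (fun z => (z - c) ^ s) * h from funext hgh,
        analyticOrderAt_mul (by fun_prop) (hh.analyticAt c), analyticOrderAt_sub_const_pow_self]
    have hhc : h c = 0 := by
      rw [horder, Nat.cast_succ, ENat.add_le_add_iff_left (ENat.natCast_ne_top s)] at hs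
      exact (one_le_analyticOrderAt_iff_apply_eq_zero (hh.analyticAt c)).mp hs
    obtain ⟨k, hk, hhk⟩ := exists_eq_sub_mul_of_apply_eq_zero hh hhc
    exact ⟨k, hk, fun z => by rw [hgh, hhk, pow_succ, mul_assoc]⟩

lemma exists_eq_prod_sub_pow_mul_of_le_analyticOrderAt (hg : Differentiable ℂ g)
    (hs : ∀ c ∈ P, s ≤ analyticOrderAt g c) :
    ∃ h : ℂ → ℂ, Differentiable ℂ h ∧ ∀ z, g z = (∏ c ∈ P, (z - c) ^ s) * h z := by
  induction P using Finset.induction_on generalizing g with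
  | empty => exact ⟨g, hg, by simp⟩
  | insert a P ha ih =>
    obtain ⟨h, hh, hgh⟩ :=
      exists_eq_sub_pow_mul_of_le_analyticOrderAt hg (hs a (mem_insert_self a P))
    have horder : ∀ c ∈ P, s ≤ analyticOrderAt h c := fun c hc => by
      have hca : c - a ≠ 0 := sub_ne_zero.mpr fun h => ha (h ▸ hc)
      have hunit : analyticOrderAt (fun z : ℂ => (z - a) ^ s) c = 0 :=
        (AnalyticAt.analyticOrderAt_eq_zero (by fun_prop)).mpr (pow_ne_zero s hca)
      have hgc := hs c (mem_insert_of_mem hc)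
      rwa [show g = (fun z => (z - a) ^ s) * h from funext hgh,
        analyticOrderAt_mul (by fun_prop) (hh.analyticAt c), hunit, zero_add] at hgc
    obtain ⟨k, hk, hhk⟩ := ih hh horder
    exact ⟨k, hk, fun z => by rw [hgh, hhk, prod_insert ha, mul_assoc]⟩

lemma norm_le_mul_div_pow_of_le_analyticOrderAt (hg : Differentiable ℂ g) (hr : 0 < r)
    (hrR : 2 * r ≤ R) (hP : ∀ c ∈ P, ‖c‖ ≤ r) (hs : ∀ c ∈ P, s ≤ analyticOrderAt g c)
    (hB : ∀ z : ℂ, ‖z‖ = R → ‖g z‖ ≤ B) {z : ℂ} (hz : ‖z‖ ≤ r) :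
    ‖g z‖ ≤ B * (4 * r / R) ^ (#P * s) := by
  obtain ⟨h, hh, hgh⟩ := exists_eq_prod_sub_pow_mul_of_le_analyticOrderAt hg hs
  have hR : 0 < R := by linarith
  have hnorm (y : ℂ) : ‖∏ c ∈ P, (y - c) ^ s‖ = (∏ c ∈ P, ‖y - c‖) ^ s := by
    simp only [norm_prod, norm_pow, prod_pow]
  have hsphere (y : ℂ) (hy : y ∈ frontier (Metric.ball (0 : ℂ) R)) :
      ‖h y‖ ≤ B / (R / 2) ^ (#P * s) := by
    rw [frontier_ball _ hR.ne', mem_sphere_zero_iff_norm] at hy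
    have hfactors : (R / 2) ^ #P ≤ ∏ c ∈ P, ‖y - c‖ := by
      rw [← prod_const]
      refine prod_le_prod (fun _ _ => by positivity) fun c hc => ?_
      linarith [norm_sub_norm_le y c, hP c hc]
    rw [le_div_iff₀' (by positivity), pow_mul]
    calc ((R / 2) ^ #P) ^ s * ‖h y‖ ≤ (∏ c ∈ P, ‖y - c‖) ^ s * ‖h y‖ := by gcongr
      _ = ‖g y‖ := by rw [hgh, norm_mul, hnorm]
      _ ≤ B := hB y hy
  have hball : ‖h z‖ ≤ B / (R / 2) ^ (#P * s) :=
    Complex.norm_le_of_forall_mem_frontier_norm_le Metric.isBounded_ball hh.diffContOnCl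
      hsphere <| by rw [closure_ball _ hR.ne', mem_closedBall_zero_iff]; linarith
  have hfactors : ∏ c ∈ P, ‖z - c‖ ≤ (2 * r) ^ #P := by
    rw [← prod_const]
    refine prod_le_prod (fun _ _ => norm_nonneg _) fun c hc => ?_
    linarith [norm_sub_le z c, hP c hc]
  calc ‖g z‖ = (∏ c ∈ P, ‖z - c‖) ^ s * ‖h z‖ := by rw [hgh, norm_mul, hnorm]
    _ ≤ ((2 * r) ^ #P) ^ s * (B / (R / 2) ^ (#P * s)) := by gcongr
    _ = B * (4 * r / R) ^ (#P * s) := by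
      rw [← pow_mul, show 4 * r / R = 2 * r / (R / 2) by field_simp; norm_num, div_pow (2 * r)]
      ring

lemma norm_iteratedDeriv_le_of_le_analyticOrderAt (hg : Differentiable ℂ g) (hrR : 2 * r ≤ R)
    (hP : ∀ c ∈ P, ‖c‖ ≤ r) (hs : ∀ c ∈ P, s ≤ analyticOrderAt g c)
    (hB : ∀ z : ℂ, ‖z‖ = R → ‖g z‖ ≤ B) {c : ℂ} (hc : ‖c‖ + 1 ≤ r) (k : ℕ) :
    ‖iteratedDeriv k g c‖ ≤ k.factorial * (B * (4 * r / R) ^ (#P * s)) := by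
  have hr : 0 < r := by linarith [norm_nonneg c]
  have hsphere (z : ℂ) (hz : z ∈ Metric.sphere c 1) : ‖g z‖ ≤ B * (4 * r / R) ^ (#P * s) := by
    refine norm_le_mul_div_pow_of_le_analyticOrderAt hg hr hrR hP hs hB ?_
    linarith [norm_le_norm_add_norm_sub' z c, mem_sphere_iff_norm.mp hz]
  simpa using Complex.norm_iteratedDeriv_le_of_forall_mem_sphere_norm_le k one_pos
    hg.diffContOnCl hsphere

lemma iteratedDeriv_sum_mul_exp {ι : Type*} [Fintype ι] (a y : ι → ℂ) (z₀ : ℂ) (k : ℕ) :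
    iteratedDeriv k (fun z => ∑ i, a i * Complex.exp ((z - z₀) * y i)) =
      fun z => ∑ i, a i * y i ^ k * Complex.exp ((z - z₀) * y i) := by
  induction k with
  | zero => simp
  | succ k ih =>
    rw [iteratedDeriv_succ, ih]
    funext z
    have hderiv : HasDerivAt (fun z => ∑ i, a i * y i ^ k * Complex.exp ((z - z₀) * y i))
        (∑ i, a i * y i ^ k * (Complex.exp ((z - z₀) * y i) * (1 * y i))) z :=
      HasDerivAt.fun_sum fun i _ =>
        ((((hasDerivAt_id z).sub_const z₀).mul_const (y i)).cexp).const_mul _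
    rw [hderiv.deriv]
    exact sum_congr rfl fun i _ => by ring

end EntireFunctions

lemma eq_zero_of_forall_sum_mul_pow_eq_zero {R ι : Type*} [CommRing R] [IsDomain R] [Fintype ι]
    {v f : ι → R} (hf : Function.Injective f) (h : ∀ n : ℕ, ∑ i, v i * f i ^ n = 0) : v = 0 := by
  let e := Fintype.equivFin ι
  have hv : v ∘ e.symm = 0 :=
    Matrix.eq_zero_of_forall_pow_sum_mul_pow_eq_zero (hf.comp e.symm.injective) fun n =>
      (e.symm.sum_comp fun i => v i * f i ^ (n : ℕ)).trans (h n)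
  exact funext fun i => by simpa using congrFun hv (e i)

lemma norm_multiset_prod_map_le_pow_card {R ι : Type*} [SeminormedCommRing R] [NormOneClass R]
    {f : ι → R} {M : ℝ} (hf : ∀ i, ‖f i‖ ≤ M) (u : Multiset ι) :
    ‖(u.map f).prod‖ ≤ M ^ u.card := by
  induction u using Multiset.induction_on with
  | empty => simp
  | cons i u ih =>
    simp only [Multiset.map_cons, Multiset.prod_cons, Multiset.card_cons, pow_succ']
    exact (norm_mul_le _ _).trans
      (mul_le_mul (hf i) ih (norm_nonneg _) ((norm_nonneg _).trans (hf i)))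

/-! ### Houses of algebraic integers -/

section House

variable {K : Type*} [Field K] [NumberField K]

lemma house_le_of_forall_norm_embedding_le {x : K} {B : ℝ} (h : ∀ ψ : K →+* ℂ, ‖ψ x‖ ≤ B) :
    house x ≤ B := by
  obtain ⟨ψ⟩ : Nonempty (K →+* ℂ) := inferInstance
  exact (pi_norm_le_iff_of_nonneg ((norm_nonneg _).trans (h ψ))).mpr h

lemma one_le_norm_embedding_mul_house_pow {x : 𝓞 K} (hx : x ≠ 0) (φ : K →+* ℂ) :
    1 ≤ ‖φ x‖ * house (x : K) ^ (Module.finrank ℚ K - 1) := by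
  refine le_trans ?_ (norm_norm_le_norm_mul_house_pow (x : K) φ)
  rw [← Algebra.coe_norm_int x, Int.norm_cast_rat, Int.norm_eq_abs]
  exact_mod_cast Int.one_le_abs (Algebra.norm_ne_zero_iff.mpr hx)

variable (K) in
lemma exists_siegel_const_rpow : ∃ c : ℝ, ∀ {α β : Type*} [Fintype α] [Fintype β]
    {a : Matrix α β (𝓞 K)} {A : ℝ}, a ≠ 0 → (∀ k l, house (a k l : K) ≤ A) →
    0 < Fintype.card α → Fintype.card α < Fintype.card β →
    ∃ ξ : β → 𝓞 K, ξ ≠ 0 ∧ a.mulVec ξ = 0 ∧ ∀ l, house (ξ l : K) ≤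
      c * (c * Fintype.card β * A) ^ (Fintype.card α / (Fintype.card β - Fintype.card α) : ℝ) := by
  classical
  exact ⟨_, fun ha hA hα hαβ =>
    house.exists_ne_zero_int_vec_house_le K _ ha hα hαβ rfl hA rfl⟩

lemma mul_rpow_le_mul_of_le_one {c A e : ℝ} {m : ℕ} (hm : 1 ≤ m) (hA : 1 ≤ A) (he₀ : 0 ≤ e)
    (he₁ : e ≤ 1) : c * (c * m * A) ^ e ≤ max 1 |c| * (max 1 |c| * m * A) := by
  have hm' : (1 : ℝ) ≤ m := mod_cast hm
  have hbase : 1 ≤ max 1 |c| * m * A :=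
    one_le_mul_of_one_le_of_one_le (one_le_mul_of_one_le_of_one_le (le_max_left _ _) hm') hA
  have habs : |c * m * A| ≤ max 1 |c| * m * A := by
    rw [abs_mul, abs_mul, Nat.abs_cast, abs_of_nonneg (by linarith : 0 ≤ A)]
    gcongr
    exact le_max_right _ _
  calc c * (c * m * A) ^ e ≤ |c| * |(c * m * A) ^ e| := by rw [← abs_mul]; exact le_abs_self _
    _ ≤ max 1 |c| * |c * m * A| ^ e := by
      gcongr
      exacts [le_max_right _ _, Real.abs_rpow_le_abs_rpow _ _]
    _ ≤ max 1 |c| * (max 1 |c| * m * A) ^ e := by gcongr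
    _ ≤ max 1 |c| * (max 1 |c| * m * A) := by
      gcongr
      simpa using Real.rpow_le_rpow_of_exponent_le hbase he₁

variable (K) in
lemma exists_siegel_const : ∃ c : ℝ, 1 ≤ c ∧ ∀ {α β : Type*} [Fintype α] [Fintype β]
    {a : Matrix α β (𝓞 K)} {A : ℝ}, a ≠ 0 → 1 ≤ A → (∀ k l, house (a k l : K) ≤ A) →
    0 < Fintype.card α → 2 * Fintype.card α ≤ Fintype.card β →
    ∃ ξ : β → 𝓞 K, ξ ≠ 0 ∧ a.mulVec ξ = 0 ∧
      ∀ l, house (ξ l : K) ≤ c * (c * Fintype.card β * A) := by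
  obtain ⟨c, hc⟩ := exists_siegel_const_rpow K
  refine ⟨max 1 |c|, le_max_left _ _, fun {α β} _ _ a A ha hA hhouse hα hαβ => ?_⟩
  obtain ⟨ξ, hξ, hmul, hbound⟩ := hc ha hhouse hα (by lia)
  refine ⟨ξ, hξ, hmul, fun l => (hbound l).trans (mul_rpow_le_mul_of_le_one (by lia) hA ?_ ?_)⟩
  all_goals
    have hα' : (0 : ℝ) < Fintype.card α := mod_cast hα
    have hαβ' : (2 : ℝ) * Fintype.card α ≤ Fintype.card β := mod_cast hαβ
  · exact div_nonneg hα'.le (by linarith)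
  · exact (div_le_one (by linarith)).mpr (by linarith)

end House

/-! ### The auxiliary function argument -/

lemma exists_card_le_card_mul_count {ι : Type*} [Fintype ι] [DecidableEq ι] [Nonempty ι]
    (w : Multiset ι) : ∃ i, w.card ≤ Fintype.card ι * w.count i := by
  have hsum : ∑ _i : ι, w.card ≤ ∑ i, Fintype.card ι * w.count i := by
    rw [← mul_sum, Multiset.sum_count_eq_card fun i _ => mem_univ i, sum_const, card_univ,
      smul_eq_mul]
  obtain ⟨i, -, hi⟩ := exists_le_of_sum_le univ_nonempty hsum
  exact ⟨i, hi⟩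

/-- A family of exponential monomials `x ↦ exp (∑ j, x j * freq j l)`, with `l` running through a
box of side `D`, whose values at the integer points `x` of a box of side `N` are algebraic:
`value l x` is that value multiplied by `den ^ (D * N)`. The monomials are eigenfunctions both of
the partial derivatives, with eigenvalues `freq j l`, and of the differential operators indexed by
`S`, with algebraic eigenvalues `slope σ l`; the matrices `toFreq` and `toSlope` express the two
families of eigenvalues through each other. The constant `C` controls all sizes. -/
structure ExponentialSystem (K : Type*) [Field K] [NumberField K] (I S : Type*) [Fintype I]
    [Fintype S] where
  emb : K →+* ℂ
  freq {D : ℕ} : I → (I → Fin D) → ℂ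
  slope {D : ℕ} : S → (I → Fin D) → 𝓞 K
  value {D N : ℕ} : (I → Fin D) → (I → Fin N) → 𝓞 K
  toFreq : I → S → ℂ
  toSlope : S → I → ℂ
  den : ℕ
  C : ℝ
  one_le_den : 1 ≤ den
  one_le_C : 1 ≤ C
  freq_eq {D : ℕ} (j : I) (l : I → Fin D) : freq j l = ∑ σ, toFreq j σ * emb (slope σ l)
  emb_slope {D : ℕ} (σ : S) (l : I → Fin D) : emb (slope σ l) = ∑ j, toSlope σ j * freq j l
  emb_value {D N : ℕ} (l : I → Fin D) (x : I → Fin N) :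
    emb (value l x) = den ^ (D * N) * Complex.exp (∑ j, (x j : ℕ) * freq j l)
  norm_toSlope_le (σ : S) (j : I) : ‖toSlope σ j‖ ≤ C
  norm_freq_le {D : ℕ} (j : I) (l : I → Fin D) : ‖freq j l‖ ≤ C * D
  house_slope_le {D : ℕ} (σ : S) (l : I → Fin D) : house (slope σ l : K) ≤ C * D
  house_value_le {D N : ℕ} (l : I → Fin D) (x : I → Fin N) :
    house (value l x : K) ≤ Real.exp (C * (D * N))
  exists_injective_slope : ∃ σ, ∀ D : ℕ, Function.Injective (slope (D := D) σ)

namespace ExponentialSystem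

variable {K : Type*} [Field K] [NumberField K] {I S : Type*} [Fintype I] [Fintype S]
  (d : ExponentialSystem K I S) {D N n : ℕ}

lemma one_le_C_mul (hD : 1 ≤ D) : 1 ≤ d.C * D :=
  one_le_mul_of_one_le_of_one_le d.one_le_C (mod_cast hD)

lemma den_pow_ne_zero (k : ℕ) : (d.den : ℂ) ^ k ≠ 0 :=
  pow_ne_zero _ (Nat.cast_ne_zero.mpr (Nat.one_le_iff_ne_zero.mp d.one_le_den))

lemma norm_exp_sum_mul_freq_le (l : I → Fin D) (x : I → Fin N) :
    ‖Complex.exp (∑ j, (x j : ℕ) * d.freq j l)‖ ≤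
      Real.exp (Fintype.card I * (N * (d.C * D))) := by
  refine (Complex.norm_exp_le_exp_norm _).trans (Real.exp_le_exp.mpr ?_)
  have hterm (j : I) : ‖((x j : ℕ) : ℂ) * d.freq j l‖ ≤ N * (d.C * D) := by
    rw [norm_mul, Complex.norm_natCast]
    exact mul_le_mul (mod_cast (x j).2.le) (d.norm_freq_le j l) (norm_nonneg _) (by positivity)
  exact (norm_sum_le_of_le _ fun j _ => hterm j).trans_eq (by simp)

variable [DecidableEq I]

/-- The value at `x` of the exponential polynomial with coefficients `a`, differentiated along the
coordinates in `w` and along the directions in `u`. -/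
noncomputable def mixedDeriv (a : (I → Fin D) → ℂ) (w : Multiset I) (u : Multiset S)
    (x : I → Fin N) : ℂ :=
  ∑ l, a l * (w.map (d.freq · l)).prod * (u.map (d.emb <| d.slope · l)).prod *
    Complex.exp (∑ j, (x j : ℕ) * d.freq j l)

/-- The algebraic integer whose image under `emb` is `den ^ (D * N)` times the derivative along `u`
at `x` of the exponential polynomial with integral coefficients `p`. -/
noncomputable def intDeriv (p : (I → Fin D) → 𝓞 K) (u : Multiset S) (x : I → Fin N) : 𝓞 K :=
  ∑ l, p l * (u.map (d.slope · l)).prod * d.value l x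

/-- The exponential polynomial with coefficients `p` vanishes to order at least `n` at each point
of the box of side `N`. -/
def VanishesToOrder (N : ℕ) (p : (I → Fin D) → 𝓞 K) (n : ℕ) : Prop :=
  ∀ u : Multiset S, u.card < n → ∀ x : I → Fin N, d.intDeriv p u x = 0

lemma mixedDeriv_cons_freq (a : (I → Fin D) → ℂ) (j : I) (w : Multiset I) (u : Multiset S)
    (x : I → Fin N) :
    d.mixedDeriv a (j ::ₘ w) u x = ∑ σ, d.toFreq j σ * d.mixedDeriv a w (σ ::ₘ u) x := by
  simp only [mixedDeriv, Multiset.map_cons, Multiset.prod_cons, d.freq_eq j, mul_sum, sum_mul]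
  rw [sum_comm]
  exact sum_congr rfl fun σ _ => sum_congr rfl fun l _ => by ring

lemma mixedDeriv_cons_slope (a : (I → Fin D) → ℂ) (σ : S) (w : Multiset I) (u : Multiset S)
    (x : I → Fin N) :
    d.mixedDeriv a w (σ ::ₘ u) x = ∑ j, d.toSlope σ j * d.mixedDeriv a (j ::ₘ w) u x := by
  simp only [mixedDeriv, Multiset.map_cons, Multiset.prod_cons, d.emb_slope σ, mul_sum, sum_mul]
  rw [sum_comm]
  exact sum_congr rfl fun j _ => sum_congr rfl fun l _ => by ring

lemma mixedDeriv_eq_zero_of_card_add_card_lt {a : (I → Fin D) → ℂ}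
    (h : ∀ u : Multiset S, u.card < n → ∀ x : I → Fin N, d.mixedDeriv a 0 u x = 0)
    {w : Multiset I} {u : Multiset S} (hwu : w.card + u.card < n) (x : I → Fin N) :
    d.mixedDeriv a w u x = 0 := by
  induction w using Multiset.induction_on generalizing u with
  | empty => exact h u (by simpa using hwu) x
  | cons j w ih =>
    rw [mixedDeriv_cons_freq]
    refine sum_eq_zero fun σ _ => ?_
    rw [ih (by rw [Multiset.card_cons] at hwu ⊢; lia), mul_zero]

lemma norm_mixedDeriv_le_of_card_add_card_eq {a : (I → Fin D) → ℂ} {x : I → Fin N} {B : ℝ}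
    (h : ∀ w : Multiset I, w.card = n → ‖d.mixedDeriv a w 0 x‖ ≤ B)
    {w : Multiset I} {u : Multiset S} (hwu : w.card + u.card = n) :
    ‖d.mixedDeriv a w u x‖ ≤ (Fintype.card I * d.C) ^ u.card * B := by
  induction u using Multiset.induction_on generalizing w with
  | empty => simpa using h w (by simpa using hwu)
  | cons σ u ih =>
    have hterm (j : I) : ‖d.toSlope σ j * d.mixedDeriv a (j ::ₘ w) u x‖ ≤
        d.C * ((Fintype.card I * d.C) ^ u.card * B) := by
      rw [norm_mul]
      exact mul_le_mul (d.norm_toSlope_le σ j)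
        (ih (by rw [Multiset.card_cons] at hwu ⊢; lia)) (norm_nonneg _)
        (zero_le_one.trans d.one_le_C)
    rw [mixedDeriv_cons_slope]
    refine (norm_sum_le_of_le _ fun j _ => hterm j).trans_eq ?_
    rw [sum_const, card_univ, nsmul_eq_mul, Multiset.card_cons]
    ring

lemma emb_intDeriv (p : (I → Fin D) → 𝓞 K) (u : Multiset S) (x : I → Fin N) :
    d.emb (d.intDeriv p u x) = d.den ^ (D * N) * d.mixedDeriv (fun l => d.emb (p l)) 0 u x := by
  simp only [intDeriv, mixedDeriv, map_sum, map_mul, mul_sum, Multiset.map_zero,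
    Multiset.prod_zero, mul_one, map_multiset_prod, Multiset.map_map, Function.comp_def,
    d.emb_value]
  exact sum_congr rfl fun l _ => by ring

lemma intDeriv_eq_zero_iff {p : (I → Fin D) → 𝓞 K} {u : Multiset S} {x : I → Fin N} :
    d.intDeriv p u x = 0 ↔ d.mixedDeriv (fun l => d.emb (p l)) 0 u x = 0 := by
  rw [← (mul_eq_zero_iff_left (d.den_pow_ne_zero (D * N))), ← d.emb_intDeriv, map_eq_zero,
    RingOfIntegers.coe_eq_zero_iff]

lemma house_intDeriv_le {p : (I → Fin D) → 𝓞 K} {P : ℝ} (hP : ∀ l, house (p l : K) ≤ P)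
    (u : Multiset S) (x : I → Fin N) :
    house (d.intDeriv p u x : K) ≤
      D ^ Fintype.card I * (P * (d.C * D) ^ u.card * Real.exp (d.C * (D * N))) := by
  refine house_le_of_forall_norm_embedding_le fun ψ => ?_
  have hterm (l : I → Fin D) : ‖ψ (p l * (u.map (d.slope · l)).prod * d.value l x : 𝓞 K)‖ ≤
      P * (d.C * D) ^ u.card * Real.exp (d.C * (D * N)) := by
    have hslopes : ‖ψ ((u.map (d.slope · l)).prod : 𝓞 K)‖ ≤ (d.C * D) ^ u.card := by
      simp only [map_multiset_prod, Multiset.map_map]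
      exact norm_multiset_prod_map_le_pow_card
        (fun σ => (norm_embedding_le_house _ ψ).trans (d.house_slope_le σ l)) u
    have hcoeff := (norm_embedding_le_house _ ψ).trans (hP l)
    have hvalue := (norm_embedding_le_house _ ψ).trans (d.house_value_le l x)
    have hP₀ := (norm_nonneg _).trans hcoeff
    have hC₀ := zero_le_one.trans d.one_le_C
    simp only [map_mul, norm_mul]
    gcongr
  simp only [intDeriv, map_sum]
  exact (norm_sum_le_of_le _ fun l _ => hterm l).trans_eq (by simp)

/-- The restriction, to the line through `x` in the direction of the coordinate `j`, of the
derivative along `w` of the exponential polynomial with coefficients `a`. -/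
noncomputable def lineRestriction (a : (I → Fin D) → ℂ) (w : Multiset I) (x : I → Fin N) (j : I)
    (z : ℂ) : ℂ :=
  ∑ l, a l * (w.map (d.freq · l)).prod * Complex.exp (∑ i, (x i : ℕ) * d.freq i l) *
    Complex.exp ((z - (x j : ℕ)) * d.freq j l)

lemma differentiable_lineRestriction (a : (I → Fin D) → ℂ) (w : Multiset I) (x : I → Fin N)
    (j : I) : Differentiable ℂ (d.lineRestriction a w x j) := by
  unfold lineRestriction
  fun_prop

lemma exp_sum_update_mul (l : I → Fin D) (x : I → Fin N) (j : I) (q : Fin N) :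
    Complex.exp (∑ i, (Function.update x j q i : ℕ) * d.freq i l) =
      Complex.exp (∑ i, (x i : ℕ) * d.freq i l) *
        Complex.exp (((q : ℕ) - (x j : ℕ)) * d.freq j l) := by
  rw [← Complex.exp_add, ← add_sum_erase _ _ (mem_univ j),
    ← add_sum_erase _ (fun i => ((x i : ℕ) : ℂ) * d.freq i l) (mem_univ j),
    sum_congr rfl fun i hi => by rw [Function.update_of_ne (ne_of_mem_erase hi)],
    Function.update_self]
  ring_nf

lemma iteratedDeriv_lineRestriction (a : (I → Fin D) → ℂ) (w : Multiset I) (x : I → Fin N) (j : I)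
    (k : ℕ) (q : Fin N) :
    iteratedDeriv k (d.lineRestriction a w x j) (q : ℕ) =
      d.mixedDeriv a (Multiset.replicate k j + w) 0 (Function.update x j q) := by
  unfold lineRestriction
  simp only [iteratedDeriv_sum_mul_exp, mixedDeriv, Multiset.map_add, Multiset.prod_add,
    Multiset.map_replicate, Multiset.prod_replicate, Multiset.map_zero, Multiset.prod_zero,
    exp_sum_update_mul]
  exact sum_congr rfl fun l _ => by ring

lemma norm_lineRestriction_le (hD : 1 ≤ D) {a : (I → Fin D) → ℂ} {P : ℝ} (hP : ∀ l, ‖a l‖ ≤ P)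
    {w : Multiset I} (hw : w.card ≤ n) (x : I → Fin N) (j : I) (z : ℂ) :
    ‖d.lineRestriction a w x j z‖ ≤ D ^ Fintype.card I *
      (P * (d.C * D) ^ n * Real.exp (((Fintype.card I + 1) * N + ‖z‖) * (d.C * D))) := by
  have hCD := d.one_le_C_mul hD
  have hterm (l : I → Fin D) : ‖a l * (w.map (d.freq · l)).prod *
      Complex.exp (∑ i, (x i : ℕ) * d.freq i l) * Complex.exp ((z - (x j : ℕ)) * d.freq j l)‖ ≤
      P * (d.C * D) ^ n * Real.exp (Fintype.card I * (N * (d.C * D))) *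
        Real.exp ((‖z‖ + N) * (d.C * D)) := by
    have hP₀ := (norm_nonneg _).trans (hP l)
    have hfreqs : ‖(w.map (d.freq · l)).prod‖ ≤ (d.C * D) ^ n :=
      (norm_multiset_prod_map_le_pow_card (fun i => d.norm_freq_le i l) w).trans
        (pow_le_pow_right₀ hCD hw)
    have hline : ‖Complex.exp ((z - (x j : ℕ)) * d.freq j l)‖ ≤
        Real.exp ((‖z‖ + N) * (d.C * D)) := by
      refine (Complex.norm_exp_le_exp_norm _).trans (Real.exp_le_exp.mpr ?_)
      rw [norm_mul]
      refine mul_le_mul ((norm_sub_le _ _).trans ?_) (d.norm_freq_le j l) (norm_nonneg _)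
        (by positivity)
      rw [Complex.norm_natCast]
      gcongr
      exact (x j).2.le
    simp only [norm_mul]
    gcongr
    exacts [hP l, d.norm_exp_sum_mul_freq_le l x]
  refine (norm_sum_le_of_le _ fun l _ => hterm l).trans_eq ?_
  simp only [sum_const, card_univ, Fintype.card_fun, Fintype.card_fin, nsmul_eq_mul,
    Nat.cast_pow, mul_assoc, ← Real.exp_add]
  ring_nf

lemma le_analyticOrderAt_lineRestriction {a : (I → Fin D) → ℂ}
    (h : ∀ u : Multiset S, u.card < n → ∀ x : I → Fin N, d.mixedDeriv a 0 u x = 0)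
    {s : ℕ} {w : Multiset I} (hw : s + w.card ≤ n) (x : I → Fin N) (j : I) (q : Fin N) :
    s ≤ analyticOrderAt (d.lineRestriction a w x j) (q : ℕ) := by
  rw [natCast_le_analyticOrderAt_iff_iteratedDeriv_eq_zero
    ((d.differentiable_lineRestriction a w x j).analyticAt _)]
  intro k hk
  rw [d.iteratedDeriv_lineRestriction]
  refine d.mixedDeriv_eq_zero_of_card_add_card_lt h ?_ _
  rw [Multiset.card_add, Multiset.card_replicate, Multiset.card_zero]
  lia

lemma norm_mixedDeriv_replicate_add_le (hD : 1 ≤ D) {a : (I → Fin D) → ℂ}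
    (h : ∀ u : Multiset S, u.card < n → ∀ x : I → Fin N, d.mixedDeriv a 0 u x = 0)
    {P R : ℝ} (hP : ∀ l, ‖a l‖ ≤ P) (hR : 2 * N ≤ R) (x : I → Fin N) (j : I) {s : ℕ}
    {w : Multiset I} (hw : s + w.card = n) :
    ‖d.mixedDeriv a (Multiset.replicate s j + w) 0 x‖ ≤ s.factorial *
      (D ^ Fintype.card I * (P * (d.C * D) ^ n *
        Real.exp (((Fintype.card I + 1) * N + R) * (d.C * D))) * (4 * N / R) ^ (N * s)) := by
  have hmem {c : ℂ} (hc : c ∈ univ.image fun q : Fin N => ((q : ℕ) : ℂ)) :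
      ∃ q : Fin N, ((q : ℕ) : ℂ) = c := by
    simpa only [mem_image, mem_univ, true_and] using hc
  have hinj : Function.Injective fun q : Fin N => ((q : ℕ) : ℂ) :=
    Nat.cast_injective.comp Fin.val_injective
  have hschwarz := norm_iteratedDeriv_le_of_le_analyticOrderAt (R := R) (c := (x j : ℕ))
    (d.differentiable_lineRestriction a w x j) hR
    (fun c hc => by
      obtain ⟨q, rfl⟩ := hmem hc
      rw [Complex.norm_natCast]
      exact_mod_cast q.2.le)
    (fun c hc => by
      obtain ⟨q, rfl⟩ := hmem hc
      exact d.le_analyticOrderAt_lineRestriction h hw.le x j q)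
    (fun z hz => hz ▸ d.norm_lineRestriction_le hD hP (by lia : w.card ≤ n) x j z)
    (by rw [Complex.norm_natCast]; exact_mod_cast (x j).2) s
  rwa [d.iteratedDeriv_lineRestriction, Function.update_eq_self, card_image_of_injective _ hinj,
    card_univ, Fintype.card_fin] at hschwarz

lemma norm_mixedDeriv_freq_le [Nonempty I] (hD : 1 ≤ D) (hN : 1 ≤ N) {a : (I → Fin D) → ℂ}
    (h : ∀ u : Multiset S, u.card < n → ∀ x : I → Fin N, d.mixedDeriv a 0 u x = 0)
    {P R : ℝ} (hP : ∀ l, ‖a l‖ ≤ P) (hR : 4 * N ≤ R) (x : I → Fin N) {w : Multiset I}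
    (hw : w.card = n) :
    ‖d.mixedDeriv a w 0 x‖ ≤ n.factorial * (D ^ Fintype.card I * (P * (d.C * D) ^ n *
      Real.exp (((Fintype.card I + 1) * N + R) * (d.C * D))) *
      (4 * N / R) ^ (N * (n / Fintype.card I) : ℝ)) := by
  obtain ⟨j, hj⟩ := exists_card_le_card_mul_count w
  set s := w.count j
  have hsplit : Multiset.replicate s j + w.filter (¬j = ·) = w := by
    rw [← Multiset.filter_eq]
    exact Multiset.filter_add_not _ _
  have hcard : s + (w.filter (¬j = ·)).card = n := by
    rw [← Multiset.card_replicate s j, ← Multiset.card_add, hsplit, hw]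
  have hN₀ : (0 : ℝ) < N := mod_cast hN
  have hR₀ : 0 < R := by linarith
  have hdecay : (4 * N / R) ^ (N * s) ≤ (4 * N / R) ^ (N * (n / Fintype.card I) : ℝ) := by
    have hns : (n / Fintype.card I : ℝ) ≤ s :=
      div_le_of_le_mul₀ (by positivity) (by positivity) (by rw [← hw, mul_comm]; exact_mod_cast hj)
    rw [← Real.rpow_natCast]
    refine Real.rpow_le_rpow_of_exponent_ge (by positivity) ((div_le_one hR₀).mpr hR) ?_
    push_cast
    gcongr
  have hC₀ : 0 ≤ d.C * D := zero_le_one.trans (d.one_le_C_mul hD)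
  have hP₀ : 0 ≤ P := (norm_nonneg _).trans (hP fun _ => ⟨0, hD⟩)
  have hbound := d.norm_mixedDeriv_replicate_add_le (R := R) hD h hP (by linarith) x j hcard
  rw [hsplit] at hbound
  refine hbound.trans ?_
  gcongr
  lia

end ExponentialSystem

lemma natCast_le_mul_log {n : ℕ} (hn : 3 ≤ n) : (n : ℝ) ≤ n * Real.log n := by
  have hn₃ : (3 : ℝ) ≤ n := mod_cast hn
  refine le_mul_of_one_le_right (by positivity) ?_
  rw [Real.le_log_iff_exp_le (by positivity)]
  linarith [Real.exp_one_lt_d9]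

lemma one_le_mul_log {n : ℕ} (hn : 3 ≤ n) : 1 ≤ n * Real.log n :=
  (mod_cast (by lia : 1 ≤ n) : (1 : ℝ) ≤ n).trans (natCast_le_mul_log hn)

lemma mul_log_le_mul_log {m n : ℕ} (hm : 1 ≤ m) (hmn : m ≤ n) :
    m * Real.log m ≤ n * Real.log n := by
  have hm₁ : (1 : ℝ) ≤ m := mod_cast hm
  have := Real.log_nonneg hm₁
  gcongr

lemma pow_le_exp_mul_log {a C : ℝ} {k n : ℕ} (hn : 3 ≤ n) (hC : 1 ≤ C) (ha : 0 ≤ a)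
    (haC : a ≤ C * n) (hk : k ≤ n) : a ^ k ≤ Real.exp ((Real.log C + 1) * (n * Real.log n)) := by
  have hn₁ : (1 : ℝ) ≤ n := mod_cast (by lia : 1 ≤ n)
  have hlogC := Real.log_nonneg hC
  calc a ^ k ≤ (C * n) ^ k := by gcongr
    _ ≤ (C * n) ^ n := pow_le_pow_right₀ (one_le_mul_of_one_le_of_one_le hC hn₁) hk
    _ = Real.exp (Real.log C * n + n * Real.log n) := by
      rw [← Real.exp_log (by positivity : 0 < C * n), ← Real.exp_nat_mul,
        Real.log_mul (by positivity) (by positivity)]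
      ring_nf
    _ ≤ Real.exp (Real.log C * (n * Real.log n) + n * Real.log n) := by
      gcongr
      exact natCast_le_mul_log hn
    _ = _ := by ring_nf

lemma natCast_le_exp_mul_log {m n : ℕ} (hn : 3 ≤ n) (hmn : m ≤ n) :
    (m : ℝ) ≤ Real.exp (n * Real.log n) := by
  simpa using pow_le_exp_mul_log (k := 1) hn le_rfl m.cast_nonneg (by simpa using hmn) (by lia)

lemma natCast_factorial_le_exp_mul_log {n : ℕ} (hn : 3 ≤ n) :
    (n.factorial : ℝ) ≤ Real.exp (n * Real.log n) := by
  simpa using (mod_cast n.factorial_le_pow : (n.factorial : ℝ) ≤ n ^ n).trans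
    (pow_le_exp_mul_log hn le_rfl n.cast_nonneg (by simp) le_rfl)

lemma pow_le_exp_log_mul {a : ℝ} {k : ℕ} (ha : 1 ≤ a) {M : ℝ} (hk : k ≤ M) :
    a ^ k ≤ Real.exp (Real.log a * M) := by
  have hlog := Real.log_nonneg ha
  calc a ^ k = Real.exp (Real.log a * k) := by
        rw [mul_comm, Real.exp_nat_mul, Real.exp_log (by positivity)]
    _ ≤ _ := by gcongr

lemma mul_pow_sub_one_mul_le {N v k : ℕ} (hk : k ≠ 0) (h : 2 * N ^ 2 ≤ v) :
    2 * N * v ^ (k - 1) * N ≤ v ^ k :=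
  calc 2 * N * v ^ (k - 1) * N = v ^ (k - 1) * (2 * N ^ 2) := by ring
    _ ≤ v ^ (k - 1) * v := by gcongr
    _ = v ^ k := pow_sub_one_mul hk v

/- With `n ^ k⁻¹` playing the role of a radius, the decay `(4 * N / n ^ k⁻¹) ^ (N * n / k)` is of
order `exp (-(N / k ^ 2) * n * log n)`, so a large `N` beats any fixed `κ`. -/
lemma exists_exp_mul_rpow_lt_one (κ c : ℝ) {k : ℕ} (hk : 0 < k) :
    ∃ N : ℕ, 1 ≤ N ∧ ∃ V : ℕ, ∀ n : ℕ, V ≤ n →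
      Real.exp (κ * (n * Real.log n) + c * (N * n)) *
        (4 * N / (n : ℝ) ^ (k : ℝ)⁻¹) ^ (N * (n / k) : ℝ) < 1 := by
  obtain ⟨N, hN⟩ := exists_nat_ge (max 1 ((κ + 1) * k ^ 2))
  obtain ⟨hN₁, hNκ⟩ := max_le_iff.mp hN
  set Q : ℝ := c * N + N / k * Real.log (4 * N)
  obtain ⟨V, hV⟩ := exists_nat_ge (Real.exp (Q + 1))
  refine ⟨N, mod_cast hN₁, V, fun n hn => ?_⟩
  have hQn : Real.exp (Q + 1) ≤ n := hV.trans (mod_cast hn)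
  have hn₀ : (0 : ℝ) < n := (Real.exp_pos _).trans_le hQn
  have hQlog : Q + 1 ≤ Real.log n := (Real.le_log_iff_exp_le hn₀).mpr hQn
  have _ : (0 : ℝ) < k := mod_cast hk
  rw [← Real.exp_log (by positivity : 0 < 4 * N / (n : ℝ) ^ (k : ℝ)⁻¹), ← Real.exp_mul,
    ← Real.exp_add, Real.exp_lt_one_iff, Real.log_div (by positivity) (by positivity),
    Real.log_rpow hn₀]
  have hκN : (κ + 1) * (n * Real.log n) ≤ N / k ^ 2 * (n * Real.log n) := by
    have := (le_div_iff₀ (by positivity)).mpr hNκ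
    gcongr
  have hQ : Q * n + n ≤ n * Real.log n := by
    calc Q * n + n = n * (Q + 1) := by ring
      _ ≤ _ := by gcongr
  calc _ = κ * (n * Real.log n) + Q * n - N / k ^ 2 * (n * Real.log n) := by
        simp only [Q]
        field_simp
        ring
    _ < 0 := by linarith

namespace ExponentialSystem

variable {K : Type*} [Field K] [NumberField K] {I S : Type*} [Fintype I] [Fintype S]
  (d : ExponentialSystem K I S) {D N n : ℕ}

lemma C_mul_pow_le_exp_mul_log (hn : 3 ≤ n) (hDn : D ≤ n) :
    (d.C * D) ^ n ≤ Real.exp ((Real.log d.C + 1) * (n * Real.log n)) := by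
  have hC₀ := zero_le_one.trans d.one_le_C
  exact pow_le_exp_mul_log hn d.one_le_C (by positivity) (by gcongr) le_rfl

lemma exp_mul_C_mul_le {a R M : ℝ} (ha : 0 ≤ a) (hDNM : D * N ≤ M) (hDR : D * R ≤ 2 * (N * n)) :
    Real.exp ((a * N + R) * (d.C * D)) ≤ Real.exp (a * d.C * M + 2 * d.C * (N * n)) := by
  have hC₀ := zero_le_one.trans d.one_le_C
  refine Real.exp_le_exp.mpr ?_
  calc _ = a * d.C * (D * N) + d.C * (D * R) := by ring
    _ ≤ a * d.C * M + d.C * (2 * (N * n)) := by gcongr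
    _ = _ := by ring

lemma value_ne_zero (l : I → Fin D) (x : I → Fin N) : d.value l x ≠ 0 := by
  intro h
  refine mul_ne_zero (d.den_pow_ne_zero (D * N)) (Complex.exp_ne_zero _)
    ((d.emb_value l x).symm.trans ?_)
  simp [h]

/-- The matrix of the linear system expressing that all derivatives of order less than `T` in each
of the directions `S` vanish on the box of side `N`. -/
def vanishingMatrix (D N T : ℕ) : Matrix ((S → Fin T) × (I → Fin N)) (I → Fin D) (𝓞 K) :=
  fun k l => (∏ σ, d.slope σ l ^ (k.1 σ : ℕ)) * d.value l k.2

lemma vanishingMatrix_ne_zero {T : ℕ} (hD : 1 ≤ D) (hN : 1 ≤ N) (hT : 1 ≤ T) :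
    d.vanishingMatrix D N T ≠ 0 := by
  intro h
  have hentry := congrFun₂ h (fun _ => ⟨0, hT⟩, fun _ => ⟨0, hN⟩) (fun _ => ⟨0, hD⟩)
  simp only [vanishingMatrix, pow_zero, prod_const_one, one_mul, Matrix.zero_apply] at hentry
  exact d.value_ne_zero _ _ hentry

lemma house_vanishingMatrix_le {T : ℕ} (hD : 1 ≤ D) (k : (S → Fin T) × (I → Fin N))
    (l : I → Fin D) : house (d.vanishingMatrix D N T k l : K) ≤
      ((d.C * D) ^ T) ^ Fintype.card S * Real.exp (d.C * (D * N)) := by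
  refine house_le_of_forall_norm_embedding_le fun ψ => ?_
  have hslope (σ : S) : ‖ψ (d.slope σ l : K) ^ (k.1 σ : ℕ)‖ ≤ (d.C * D) ^ T := by
    rw [norm_pow]
    exact (pow_le_pow_left₀ (norm_nonneg _)
      ((norm_embedding_le_house _ ψ).trans (d.house_slope_le σ l)) _).trans
      (pow_le_pow_right₀ (d.one_le_C_mul hD) (k.1 σ).2.le)
  have hslopes : ‖∏ σ, ψ (d.slope σ l : K) ^ (k.1 σ : ℕ)‖ ≤ ((d.C * D) ^ T) ^ Fintype.card S := by
    rw [norm_prod, ← card_univ, ← prod_const]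
    exact prod_le_prod (fun _ _ => norm_nonneg _) fun σ _ => hslope σ
  have hvalue := (norm_embedding_le_house _ ψ).trans (d.house_value_le l k.2)
  simp only [vanishingMatrix, map_mul, map_prod, map_pow, norm_mul]
  exact mul_le_mul hslopes hvalue (norm_nonneg _) ((norm_nonneg _).trans hslopes)

/-- If the coefficients of an exponential polynomial have houses at most `exp (κ * n * log n)`, its
derivatives of order `n` have houses at most `exp (houseRate κ * n * log n)`. -/
noncomputable def houseRate (κ : ℝ) : ℝ := Fintype.card I + κ + (Real.log d.C + 1) + d.C

/-- If the coefficients of an exponential polynomial have houses at most `exp (κ * n * log n)`, then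
`exp (normRate κ * n * log n)` majorizes the factors of the bound for its derivatives of order `n`
which do not depend on the radius in Schwarz's lemma. -/
noncomputable def normRate (κ : ℝ) : ℝ :=
  Real.log d.den + Real.log (Fintype.card I * d.C) + 1 + Fintype.card I + κ +
    (Real.log d.C + 1) + (Fintype.card I + 1) * d.C

section

variable [DecidableEq I]

lemma vanishesToOrder_of_mulVec_eq_zero {T : ℕ} {p : (I → Fin D) → 𝓞 K}
    (hp : (d.vanishingMatrix D N T).mulVec p = 0) : d.VanishesToOrder N p T := by
  classical
  intro u hu x
  have hrow := congrFun hp (fun σ => ⟨u.count σ, (u.count_le_card σ).trans_lt hu⟩, x)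
  rw [Pi.zero_apply] at hrow
  rw [intDeriv, ← hrow]
  refine sum_congr rfl fun l _ => ?_
  have hprod : (u.map (d.slope · l)).prod = ∏ σ, d.slope σ l ^ u.count σ := by
    rw [prod_multiset_map_count]
    refine prod_subset (subset_univ _) fun σ _ hσ => ?_
    rw [Multiset.count_eq_zero_of_notMem (mt Multiset.mem_toFinset.mpr hσ), pow_zero]
  rw [hprod, mul_assoc, mul_comm]
  rfl

lemma exists_vanishesToOrder : ∃ κ, 0 ≤ κ ∧ ∀ {D N T : ℕ}, 1 ≤ D → 1 ≤ N → 3 ≤ T → D * N ≤ T →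
    2 * (T ^ Fintype.card S * N ^ Fintype.card I) ≤ D ^ Fintype.card I →
    ∃ p : (I → Fin D) → 𝓞 K, p ≠ 0 ∧ d.VanishesToOrder N p T ∧
      ∀ l, house (p l : K) ≤ Real.exp (κ * (T * Real.log T)) := by
  classical
  obtain ⟨c, hc, hsiegel⟩ := exists_siegel_const K
  have hlogc := Real.log_nonneg hc
  have hlogC := Real.log_nonneg d.one_le_C
  have hC₀ := zero_le_one.trans d.one_le_C
  refine ⟨Real.log c + Real.log c + Fintype.card I + Fintype.card S * (Real.log d.C + 1) + d.C,
    by positivity, fun {D N T} hD hN hT hDN hcard => ?_⟩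
  have hC₁ := one_le_pow₀ (n := T) (d.one_le_C_mul hD)
  obtain ⟨p, hp, hker, hhouse⟩ := hsiegel (d.vanishingMatrix_ne_zero hD hN (by lia : 1 ≤ T))
    (one_le_mul_of_one_le_of_one_le (one_le_pow₀ hC₁) (Real.one_le_exp (by positivity)))
    (d.house_vanishingMatrix_le hD)
    (by simp only [Fintype.card_prod, Fintype.card_fun, Fintype.card_fin]; positivity)
    (by simpa only [Fintype.card_prod, Fintype.card_fun, Fintype.card_fin] using hcard)
  refine ⟨p, hp, d.vanishesToOrder_of_mulVec_eq_zero hker, fun l => (hhouse l).trans ?_⟩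
  set M := T * Real.log T
  have hDT : D ≤ T := (Nat.le_mul_of_pos_right D hN).trans hDN
  have hcM : c ≤ Real.exp (Real.log c * M) := by
    simpa using pow_le_exp_log_mul (k := 1) hc (mod_cast one_le_mul_log hT)
  have hDM : (D : ℝ) ≤ Real.exp M := natCast_le_exp_mul_log hT hDT
  have hCDM : (d.C * D) ^ T ≤ Real.exp ((Real.log d.C + 1) * M) :=
    d.C_mul_pow_le_exp_mul_log hT hDT
  have hDNM : (D * N : ℝ) ≤ M := le_trans (mod_cast hDN) (natCast_le_mul_log hT)
  calc _ ≤ Real.exp (Real.log c * M) * (Real.exp (Real.log c * M) *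
        Real.exp M ^ Fintype.card I * (Real.exp ((Real.log d.C + 1) * M) ^ Fintype.card S *
          Real.exp (d.C * M))) := by
        simp only [Fintype.card_fun, Fintype.card_fin, Nat.cast_pow]
        gcongr
    _ = _ := by
      simp only [← Real.exp_nat_mul, ← Real.exp_add]
      ring_nf

lemma exists_intDeriv_ne_zero (hN : 1 ≤ N) {p : (I → Fin D) → 𝓞 K} (hp : p ≠ 0) :
    ∃ (u : Multiset S) (x : I → Fin N), d.intDeriv p u x ≠ 0 := by
  by_contra! h
  obtain ⟨σ, hσ⟩ := d.exists_injective_slope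
  refine hp (funext fun l => ?_)
  have hcoeff : (fun l => d.emb (p l)) = 0 := by
    refine eq_zero_of_forall_sum_mul_pow_eq_zero (f := fun l => d.emb (d.slope σ l))
      (fun l l' hl => hσ D (RingOfIntegers.ext (d.emb.injective hl))) fun n => ?_
    have hn := d.intDeriv_eq_zero_iff.mp (h (Multiset.replicate n σ) fun _ => ⟨0, hN⟩)
    simpa [mixedDeriv] using hn
  simpa using congrFun hcoeff l

lemma VanishesToOrder.exists_maximal {T : ℕ} (hN : 1 ≤ N) {p : (I → Fin D) → 𝓞 K} (hp : p ≠ 0)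
    (h : d.VanishesToOrder N p T) : ∃ n, T ≤ n ∧ d.VanishesToOrder N p n ∧
      ∃ u : Multiset S, u.card = n ∧ ∃ x : I → Fin N, d.intDeriv p u x ≠ 0 := by
  classical
  have hex : ∃ n, ∃ u : Multiset S, u.card = n ∧ ∃ x : I → Fin N, d.intDeriv p u x ≠ 0 := by
    obtain ⟨u, x, hux⟩ := d.exists_intDeriv_ne_zero hN hp
    exact ⟨u.card, u, rfl, x, hux⟩
  refine ⟨Nat.find hex, ?_, fun u hu x => ?_, Nat.find_spec hex⟩
  · obtain ⟨u, hu, x, hux⟩ := Nat.find_spec hex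
    exact hu ▸ not_lt.mp fun hlt => hux (h u hlt x)
  · by_contra hux
    exact Nat.find_min hex hu ⟨u, rfl, x, hux⟩

lemma one_le_norm_emb_intDeriv_mul_exp {κ : ℝ} (hκ : 0 ≤ κ) (hn : 3 ≤ n) (hN : 1 ≤ N)
    (hDN : D * N ≤ n) {p : (I → Fin D) → 𝓞 K}
    (hp : ∀ l, house (p l : K) ≤ Real.exp (κ * (n * Real.log n))) {u : Multiset S}
    (hu : u.card = n) {x : I → Fin N} (hux : d.intDeriv p u x ≠ 0) :
    1 ≤ ‖d.emb (d.intDeriv p u x)‖ *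
      Real.exp (Module.finrank ℚ K * d.houseRate κ * (n * Real.log n)) := by
  set M := n * Real.log n
  have hC₀ := zero_le_one.trans d.one_le_C
  have hlogC := Real.log_nonneg d.one_le_C
  have _ : 0 ≤ M := zero_le_one.trans (one_le_mul_log hn)
  have hDn : D ≤ n := (Nat.le_mul_of_pos_right D hN).trans hDN
  have hDM : (D : ℝ) ≤ Real.exp M := natCast_le_exp_mul_log hn hDn
  have hCDM : (d.C * D) ^ n ≤ Real.exp ((Real.log d.C + 1) * M) :=
    d.C_mul_pow_le_exp_mul_log hn hDn
  have hDNM : (D * N : ℝ) ≤ M := le_trans (mod_cast hDN) (natCast_le_mul_log hn)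
  have hhouse : house (d.intDeriv p u x : K) ≤ Real.exp (d.houseRate κ * M) := by
    refine (d.house_intDeriv_le hp u x).trans ?_
    calc _ ≤ Real.exp M ^ Fintype.card I * (Real.exp (κ * M) *
          Real.exp ((Real.log d.C + 1) * M) * Real.exp (d.C * M)) := by
          rw [hu]
          gcongr
      _ = _ := by
        simp only [houseRate, ← Real.exp_nat_mul, ← Real.exp_add]
        ring_nf
  refine (one_le_norm_embedding_mul_house_pow hux d.emb).trans ?_
  gcongr
  calc _ ≤ Real.exp (d.houseRate κ * M) ^ (Module.finrank ℚ K - 1) :=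
        pow_le_pow_left₀ (house_nonneg _) hhouse _
    _ ≤ Real.exp (d.houseRate κ * M) ^ Module.finrank ℚ K :=
      pow_le_pow_right₀ (Real.one_le_exp (by unfold houseRate; positivity)) (Nat.sub_le _ _)
    _ = _ := by rw [← Real.exp_nat_mul, mul_assoc]

lemma norm_emb_intDeriv_le [Nonempty I] {κ R : ℝ} (hn : 3 ≤ n) (hD : 1 ≤ D) (hN : 1 ≤ N)
    (hDN : D * N ≤ n) (hR : 4 * N ≤ R) (hDR : D * R ≤ 2 * (N * n)) {p : (I → Fin D) → 𝓞 K}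
    (hp : ∀ l, house (p l : K) ≤ Real.exp (κ * (n * Real.log n)))
    (h : d.VanishesToOrder N p n) {u : Multiset S} (hu : u.card = n) (x : I → Fin N) :
    ‖d.emb (d.intDeriv p u x)‖ ≤
      Real.exp (d.normRate κ * (n * Real.log n) + 2 * d.C * (N * n)) *
      (4 * N / R) ^ (N * (n / Fintype.card I) : ℝ) := by
  set M := n * Real.log n
  set q := (4 * N / R) ^ (N * (n / Fintype.card I) : ℝ)
  have hC₁ := d.one_le_C
  have hI₁ : (1 : ℝ) ≤ Fintype.card I := mod_cast Fintype.card_pos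
  have hnM : n ≤ M := natCast_le_mul_log hn
  have hDNn : (D * N : ℝ) ≤ n := mod_cast hDN
  have hDn : D ≤ n := (Nat.le_mul_of_pos_right D hN).trans hDN
  have hDM : (D : ℝ) ≤ Real.exp M := natCast_le_exp_mul_log hn hDn
  have hCDM : (d.C * D) ^ n ≤ Real.exp ((Real.log d.C + 1) * M) :=
    d.C_mul_pow_le_exp_mul_log hn hDn
  have hdenM : (d.den : ℝ) ^ (D * N) ≤ Real.exp (Real.log d.den * M) :=
    pow_le_exp_log_mul (mod_cast d.one_le_den) (by push_cast; linarith)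
  have hICM : (Fintype.card I * d.C) ^ n ≤ Real.exp (Real.log (Fintype.card I * d.C) * M) :=
    pow_le_exp_log_mul (one_le_mul_of_one_le_of_one_le hI₁ hC₁) hnM
  have hfactorialM : (n.factorial : ℝ) ≤ Real.exp M := natCast_factorial_le_exp_mul_log hn
  have hexpM : Real.exp (((Fintype.card I + 1) * N + R) * (d.C * D)) ≤
      Real.exp ((Fintype.card I + 1) * d.C * M + 2 * d.C * (N * n)) :=
    d.exp_mul_C_mul_le (by positivity) (by linarith) hDR
  have hderiv := d.norm_mixedDeriv_le_of_card_add_card_eq (w := 0) (u := u) (x := x)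
    (fun w hw => d.norm_mixedDeriv_freq_le hD hN
      (fun u hu x => d.intDeriv_eq_zero_iff.mp (h u hu x))
      (fun l => (norm_embedding_le_house _ d.emb).trans (hp l)) hR x hw) (by simpa using hu)
  rw [d.emb_intDeriv, norm_mul, norm_pow, Complex.norm_natCast]
  calc _ ≤ Real.exp (Real.log d.den * M) * (Real.exp (Real.log (Fintype.card I * d.C) * M) *
        (Real.exp M * (Real.exp M ^ Fintype.card I * (Real.exp (κ * M) *
          Real.exp ((Real.log d.C + 1) * M) *
          Real.exp ((Fintype.card I + 1) * d.C * M + 2 * d.C * (N * n))) * q))) := by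
        have hq : 0 ≤ q := Real.rpow_nonneg (div_nonneg (by positivity) (by linarith)) _
        refine mul_le_mul hdenM (hderiv.trans ?_) (norm_nonneg _) (Real.exp_pos _).le
        rw [hu]
        gcongr
    _ = _ := by
      simp only [normRate, ← Real.exp_nat_mul, ← mul_assoc, ← Real.exp_add]
      ring_nf

lemma exists_maximal_vanishesToOrder (hSI : Fintype.card S < Fintype.card I) :
    ∃ κ, 0 ≤ κ ∧ ∀ {N v : ℕ}, 1 ≤ N → 3 ≤ v → 2 * N ^ 2 ≤ v →
      ∃ (n : ℕ) (p : (I → Fin (2 * N * v ^ (Fintype.card I - 1))) → 𝓞 K),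
        v ^ Fintype.card I ≤ n ∧ d.VanishesToOrder N p n ∧
        (∀ l, house (p l : K) ≤ Real.exp (κ * (n * Real.log n))) ∧
        ∃ u : Multiset S, u.card = n ∧ ∃ x : I → Fin N, d.intDeriv p u x ≠ 0 := by
  obtain ⟨κ, hκ, hsiegel⟩ := d.exists_vanishesToOrder
  refine ⟨κ, hκ, fun {N v} hN hv hNv => ?_⟩
  have hT : v ≤ v ^ Fintype.card I := Nat.le_self_pow (by lia) v
  have hcard : 2 * ((v ^ Fintype.card I) ^ Fintype.card S * N ^ Fintype.card I) ≤
      (2 * N * v ^ (Fintype.card I - 1)) ^ Fintype.card I := by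
    calc 2 * ((v ^ Fintype.card I) ^ Fintype.card S * N ^ Fintype.card I)
      _ ≤ 2 ^ Fintype.card I * (v ^ (Fintype.card I * (Fintype.card I - 1)) *
          N ^ Fintype.card I) := by
        rw [← pow_mul]
        gcongr
        exacts [Nat.le_self_pow (by lia) 2, by lia, by lia]
      _ = _ := by rw [mul_comm (Fintype.card I), pow_mul]; ring
  obtain ⟨p, hp, hvanish, hhouse⟩ := hsiegel
    (Nat.mul_pos (by lia) (Nat.pow_pos (by lia))) hN (hv.trans hT)
    (mul_pow_sub_one_mul_le (by lia) hNv) hcard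
  obtain ⟨n, hTn, hn, hux⟩ := hvanish.exists_maximal d hN hp
  refine ⟨n, p, hTn, hn, fun l => (hhouse l).trans (Real.exp_le_exp.mpr ?_), hux⟩
  exact mul_le_mul_of_nonneg_left (mul_log_le_mul_log (by lia) hTn) hκ

end

lemma exists_one_le_exp_mul_rpow (hSI : Fintype.card S < Fintype.card I) :
    ∃ κ, ∀ N : ℕ, 1 ≤ N → ∀ V, ∃ n : ℕ, V ≤ n ∧ 1 ≤
      Real.exp (κ * (n * Real.log n) + 2 * d.C * (N * n)) *
        (4 * N / (n : ℝ) ^ (Fintype.card I : ℝ)⁻¹) ^ (N * (n / Fintype.card I) : ℝ) := by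
  classical
  have : Nonempty I := Fintype.card_pos_iff.mp (by lia)
  obtain ⟨κ, hκ, hmax⟩ := d.exists_maximal_vanishesToOrder hSI
  refine ⟨d.normRate κ + Module.finrank ℚ K * d.houseRate κ, fun N hN V => ?_⟩
  set v := V + 3 + 2 * N ^ 2 + 4 * N
  obtain ⟨n, p, hvn, hvanish, hhouse, u, hu, x, hux⟩ := hmax hN (v := v) (by lia) (by lia)
  have hn : v ≤ n := (Nat.le_self_pow Fintype.card_ne_zero v).trans hvn
  have hRpow : ((n : ℝ) ^ (Fintype.card I : ℝ)⁻¹) ^ Fintype.card I = n :=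
    Real.rpow_inv_natCast_pow n.cast_nonneg Fintype.card_ne_zero
  set R := (n : ℝ) ^ (Fintype.card I : ℝ)⁻¹
  have hvR : v ≤ R := by
    refine (Real.le_rpow_inv_iff_of_pos (by positivity) (by positivity) (by positivity)).mpr ?_
    exact_mod_cast hvn
  have hDN := (mul_pow_sub_one_mul_le Fintype.card_ne_zero (by lia : 2 * N ^ 2 ≤ v)).trans hvn
  have hDR : ((2 * N * v ^ (Fintype.card I - 1) : ℕ) : ℝ) * R ≤ 2 * (N * n) := by
    push_cast
    calc 2 * (N : ℝ) * v ^ (Fintype.card I - 1) * R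
      _ ≤ 2 * (N : ℝ) * R ^ (Fintype.card I - 1) * R := by gcongr
      _ = 2 * (N * (R ^ (Fintype.card I - 1) * R)) := by ring
      _ = _ := by rw [pow_sub_one_mul Fintype.card_ne_zero, hRpow]
  have hvN : (4 * N : ℝ) ≤ v := mod_cast (by lia : 4 * N ≤ v)
  have hv₀ : 1 ≤ v ^ (Fintype.card I - 1) := Nat.one_le_pow _ _ (by lia)
  have hupper := d.norm_emb_intDeriv_le (by lia) (Nat.mul_pos (by lia) hv₀) hN hDN
    (hvN.trans hvR) hDR hhouse hvanish hu x
  have hlower := d.one_le_norm_emb_intDeriv_mul_exp hκ (by lia) hN hDN hhouse hu hux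
  refine ⟨n, by lia, hlower.trans ?_⟩
  refine (mul_le_mul_of_nonneg_right hupper (Real.exp_pos _).le).trans_eq ?_
  rw [mul_right_comm, ← Real.exp_add, add_mul, add_right_comm]

theorem card_le_card (d : ExponentialSystem K I S) : Fintype.card I ≤ Fintype.card S := by
  by_contra! hSI
  obtain ⟨κ, hκ⟩ := d.exists_one_le_exp_mul_rpow hSI
  obtain ⟨N, hN, V, hV⟩ := exists_exp_mul_rpow_lt_one κ (2 * d.C) (Nat.zero_lt_of_lt hSI)
  obtain ⟨n, hn, hone⟩ := hκ N hN V
  exact (hV n hn).not_ge hone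

end ExponentialSystem

/-! ### Conjugating linear relations between logarithms -/

section LinearRelations

open Module.Free (ChooseBasisIndex)

variable {K : Type*} [Field K] [NumberField K]

lemma house_mapRingHom_le (σ : K →+* K) (z : 𝓞 K) :
    house (RingOfIntegers.mapRingHom σ z : K) ≤ house (z : K) :=
  house_le_of_forall_norm_embedding_le fun ψ => norm_embedding_le_house (z : K) (ψ.comp σ)

lemma exists_sum_mul_embedding_basis_eq_ite [DecidableEq (K →+* ℂ)] :
    ∃ b : (K →+* ℂ) → ChooseBasisIndex ℤ (𝓞 K) → ℂ, ∀ ψ ψ' : K →+* ℂ,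
      ∑ j, b ψ j * ψ' (RingOfIntegers.basis K j) = if ψ = ψ' then 1 else 0 := by
  refine ⟨fun ψ j => (basisMatrix K)⁻¹ ψ ((equivReindex K).symm j), fun ψ ψ' => ?_⟩
  have hinv := congrFun₂ (Matrix.inv_mul_of_invertible (basisMatrix K)) ψ ψ'
  rw [Matrix.mul_apply, Matrix.one_apply] at hinv
  rw [← hinv, ← (equivReindex K).sum_comp]
  refine sum_congr rfl fun i _ => ?_
  have hbasis : basisMatrix K i ψ' = ψ' (RingOfIntegers.basis K (equivReindex K i)) := by
    rw [basisMatrix, Matrix.of_apply, canonicalEmbedding.latticeBasis_apply, integralBasis_apply]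
    rfl
  simp only [Equiv.symm_apply_apply, hbasis]

lemma exists_natCast_mul_isIntegral (a b : K) :
    ∃ δ : ℕ, 1 ≤ δ ∧ IsIntegral ℤ (δ * a) ∧ IsIntegral ℤ (δ * b) := by
  classical
  obtain ⟨y, hy, h⟩ := exists_integral_multiples ℤ ℚ (L := K) {a, b}
  have hnatAbs {z : K} (hz : z ∈ ({a, b} : Finset K)) : IsIntegral ℤ (y.natAbs * z) := by
    have hyz := h z hz
    rw [zsmul_eq_mul] at hyz
    obtain hsign | hsign := y.natAbs_eq <;> rw [hsign] at hyz
    · simpa using hyz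
    · simpa using hyz.neg
  exact ⟨y.natAbs, Int.natAbs_pos.mpr hy, hnatAbs (mem_insert_self _ _),
    hnatAbs (mem_insert_of_mem (mem_singleton_self _))⟩

lemma exists_integral_natCast_pow_mul_pow {δ : ℕ} {a : K} {B : ℝ} (hδ : (δ : ℝ) ≤ B)
    (ha : IsIntegral ℤ (δ * a)) (hB : house (δ * a) ≤ B) {k m : ℕ} (hk : k ≤ m) :
    ∃ y : 𝓞 K, y = δ ^ m * a ^ k ∧ house (y : K) ≤ B ^ m := by
  obtain ⟨r, rfl⟩ := Nat.exists_eq_add_of_le hk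
  have hsplit : (δ : K) ^ (k + r) * a ^ k = δ ^ r * (δ * a) ^ k := by rw [mul_pow]; ring
  refine ⟨⟨δ ^ (k + r) * a ^ k, ?_⟩, rfl, house_le_of_forall_norm_embedding_le fun ψ => ?_⟩
  · rw [hsplit]
    exact ((isIntegral_natCast δ).pow r).mul (ha.pow k)
  · have hψ := (norm_embedding_le_house (δ * a) ψ).trans hB
    have _ : 0 ≤ B := δ.cast_nonneg.trans hδ
    change ‖ψ (δ ^ (k + r) * a ^ k)‖ ≤ _
    rw [hsplit, map_mul, map_pow, map_pow, norm_mul, norm_pow, norm_pow, map_natCast,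
      Complex.norm_natCast, pow_add, mul_comm]
    gcongr

lemma exists_integral_natCast_pow_mul_zpow (a : K) :
    ∃ δ : ℕ, 1 ≤ δ ∧ ∃ C : ℝ, 0 ≤ C ∧ ∀ (m : ℕ) (t : ℤ), |t| ≤ m →
      ∃ y : 𝓞 K, y = δ ^ m * a ^ t ∧ house (y : K) ≤ Real.exp (C * m) := by
  obtain ⟨δ, hδ, ha, hinv⟩ := exists_natCast_mul_isIntegral a a⁻¹
  set B : ℝ := δ + house (δ * a) + house (δ * a⁻¹)
  have hhouse := house_nonneg (δ * a)
  have hhouse_inv := house_nonneg (δ * a⁻¹)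
  have hδB : (δ : ℝ) ≤ B := by linarith
  have hB : 1 ≤ B := (mod_cast hδ : (1 : ℝ) ≤ δ).trans hδB
  have hexp (m : ℕ) : B ^ m = Real.exp (Real.log B * m) := by
    rw [mul_comm, Real.exp_nat_mul, Real.exp_log (by positivity)]
  refine ⟨δ, hδ, Real.log B, Real.log_nonneg hB, fun m t ht => ?_⟩
  rw [← hexp]
  obtain ⟨k, rfl | rfl⟩ := Int.eq_nat_or_neg t
  · simpa using exists_integral_natCast_pow_mul_pow hδB ha (by linarith)
      (show k ≤ m by simpa using ht)
  · simpa using exists_integral_natCast_pow_mul_pow hδB hinv (by linarith)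
      (show k ≤ m by simpa using ht)

/-- The algebraic integer with coordinates `l` in the chosen integral basis. -/
noncomputable def latticePoint {D : ℕ} (l : ChooseBasisIndex ℤ (𝓞 K) → Fin D) : 𝓞 K :=
  ∑ i, ((l i : ℕ) : ℤ) • RingOfIntegers.basis K i

lemma latticePoint_injective {D : ℕ} :
    Function.Injective (latticePoint : (ChooseBasisIndex ℤ (𝓞 K) → Fin D) → 𝓞 K) := by
  intro l l' h
  funext i
  have hi := DFunLike.congr_fun (congrArg (RingOfIntegers.basis K).repr h) i
  simp only [latticePoint, (RingOfIntegers.basis K).repr_sum_self] at hi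
  exact Fin.ext (mod_cast hi)

lemma exists_house_latticePoint_le (K : Type*) [Field K] [NumberField K] :
    ∃ A : ℝ, 0 ≤ A ∧ ∀ {D : ℕ} (l : ChooseBasisIndex ℤ (𝓞 K) → Fin D),
      house (latticePoint l : K) ≤ A * D := by
  refine ⟨∑ j, house (RingOfIntegers.basis K j : K), sum_nonneg fun _ _ => house_nonneg _,
    fun {D} l => ?_⟩
  have hcoe : (latticePoint l : K) = ∑ i, ((l i : ℕ) : K) * RingOfIntegers.basis K i := by
    simp [latticePoint]
  rw [hcoe, sum_mul]
  refine (house_sum_le_sum_house _ _).trans (sum_le_sum fun i _ => ?_)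
  rw [house_nat_mul, mul_comm]
  exact mul_le_mul_of_nonneg_left (mod_cast (l i).2.le) (house_nonneg _)

lemma exists_natCast_house_latticePoint_mul_le (K : Type*) [Field K] [NumberField K] :
    ∃ M : ℕ, ∀ (D N : ℕ) (l : ChooseBasisIndex ℤ (𝓞 K) → Fin D)
      (x : ChooseBasisIndex ℤ (𝓞 K) → Fin N),
      house ((latticePoint l * latticePoint x : 𝓞 K) : K) ≤ (M * (D * N) : ℕ) := by
  obtain ⟨A, hA, hlattice⟩ := exists_house_latticePoint_le K
  obtain ⟨M, hM⟩ := exists_nat_ge (A * A)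
  refine ⟨M, fun D N l x => ?_⟩
  calc _ ≤ house (latticePoint l : K) * house (latticePoint x : K) := by
        simpa only [map_mul] using house_mul_le (latticePoint l : K) (latticePoint x)
    _ ≤ A * D * (A * N) := mul_le_mul (hlattice l) (hlattice x) (house_nonneg _) (by positivity)
    _ = A * A * (D * N) := by ring
    _ ≤ _ := by push_cast; gcongr

section Trace

variable [IsGalois ℚ K]

lemma intCast_trace_eq_sum_embedding (φ : K →+* ℂ) (x : 𝓞 K) :
    (Algebra.trace ℤ (𝓞 K) x : ℂ) = ∑ σ : K ≃ₐ[ℚ] K, φ (σ x) := by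
  rw [← map_sum, ← trace_eq_sum_automorphisms, ← Algebra.coe_trace_int]
  simp

lemma abs_trace_le_card_mul_house (x : 𝓞 K) :
    |(Algebra.trace ℤ (𝓞 K) x : ℝ)| ≤ Fintype.card (K ≃ₐ[ℚ] K) * house (x : K) := by
  obtain ⟨φ⟩ : Nonempty (K →+* ℂ) := inferInstance
  rw [← Complex.norm_intCast, intCast_trace_eq_sum_embedding φ]
  have hσ (σ : K ≃ₐ[ℚ] K) : ‖φ (σ x)‖ ≤ house (x : K) :=
    norm_embedding_le_house (x : K) (φ.comp (σ : K →+* K))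
  refine (norm_sum_le_of_le _ fun σ _ => hσ σ).trans_eq ?_
  rw [sum_const, card_univ, nsmul_eq_mul]

lemma abs_trace_mul_le (x y : 𝓞 K) :
    |(Algebra.trace ℤ (𝓞 K) (x * y) : ℝ)| ≤
      Fintype.card (K ≃ₐ[ℚ] K) * house (y : K) * house (x : K) := by
  refine (abs_trace_le_card_mul_house _).trans ?_
  rw [mul_assoc, mul_comm (house _)]
  gcongr
  simpa only [map_mul] using house_mul_le (x : K) (y : K)

lemma exists_natCast_abs_trace_mul_le (y : 𝓞 K) :
    ∃ M : ℕ, ∀ (x : 𝓞 K) (m : ℕ), house (x : K) ≤ m →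
      |Algebra.trace ℤ (𝓞 K) (x * y)| ≤ (M * m : ℕ) := by
  obtain ⟨M, hM⟩ := exists_nat_ge (Fintype.card (K ≃ₐ[ℚ] K) * house (y : K))
  refine ⟨M, fun x m hx => ?_⟩
  rify
  exact (abs_trace_mul_le x y).trans (mul_le_mul hM hx (house_nonneg _) M.cast_nonneg)

end Trace

variable {ι : Type*} [Fintype ι] (φ : K →+* ℂ) (β : ι → 𝓞 K) (lam : ι → ℂ)

/-- The linear form in `lam` whose coefficients are the conjugates by `σ` of the `β i`. -/
noncomputable def conjForm (σ : K ≃ₐ[ℚ] K) : ℂ := ∑ i, φ (σ (β i)) * lam i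

/-- The linear form in `lam` whose coefficients are the traces of `z * β i`. -/
noncomputable def traceForm (z : 𝓞 K) : ℂ := ∑ i, (Algebra.trace ℤ (𝓞 K) (z * β i) : ℂ) * lam i

lemma sum_mul_traceForm_mul_basis {N : ℕ} (z : 𝓞 K) (x : ChooseBasisIndex ℤ (𝓞 K) → Fin N) :
    ∑ j, (x j : ℕ) * traceForm β lam (z * RingOfIntegers.basis K j) =
      traceForm β lam (z * latticePoint x) := by
  have htrace (i : ι) : Algebra.trace ℤ (𝓞 K) (z * latticePoint x * β i) =
      ∑ j, (x j : ℕ) * Algebra.trace ℤ (𝓞 K) (z * RingOfIntegers.basis K j * β i) := by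
    simp only [latticePoint, mul_sum, sum_mul, map_sum, mul_smul_comm, smul_mul_assoc, map_smul,
      smul_eq_mul]
  simp only [traceForm, htrace, mul_sum, Int.cast_sum, sum_mul]
  rw [sum_comm]
  exact sum_congr rfl fun i _ => sum_congr rfl fun j _ => by push_cast; ring

variable [IsGalois ℚ K]

lemma traceForm_eq_sum_conjForm (z : 𝓞 K) :
    traceForm β lam z =
      ∑ ρ : {σ : K ≃ₐ[ℚ] K // conjForm φ β lam σ ≠ 0}, φ (ρ.1 z) * conjForm φ β lam ρ := by
  classical
  rw [← sum_subtype (univ.filter (conjForm φ β lam · ≠ 0)) (by simp)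
    (fun ρ => φ (ρ z) * conjForm φ β lam ρ),
    sum_filter_of_ne fun ρ _ h => right_ne_zero_of_mul h]
  simp only [traceForm, conjForm, intCast_trace_eq_sum_embedding φ, mul_sum, sum_mul]
  rw [sum_comm]
  exact sum_congr rfl fun ρ _ => sum_congr rfl fun i _ => by simp only [map_mul, mul_assoc]

lemma exists_norm_traceForm_le :
    ∃ C : ℝ, 0 ≤ C ∧ ∀ z : 𝓞 K, ‖traceForm β lam z‖ ≤ C * house (z : K) := by
  refine ⟨∑ i, Fintype.card (K ≃ₐ[ℚ] K) * house (β i : K) * ‖lam i‖,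
    sum_nonneg fun i _ => by have := house_nonneg (β i : K); positivity, fun z => ?_⟩
  rw [sum_mul]
  refine norm_sum_le_of_le _ fun i _ => ?_
  rw [norm_mul, Complex.norm_intCast, mul_right_comm]
  exact mul_le_mul_of_nonneg_right (abs_trace_mul_le _ _) (norm_nonneg _)

lemma exists_norm_traceForm_latticePoint_mul_basis_le :
    ∃ C : ℝ, 0 ≤ C ∧ ∀ {D : ℕ} (j : ChooseBasisIndex ℤ (𝓞 K))
      (l : ChooseBasisIndex ℤ (𝓞 K) → Fin D),
      ‖traceForm β lam (latticePoint l * RingOfIntegers.basis K j)‖ ≤ C * D := by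
  obtain ⟨A, hA, hlattice⟩ := exists_house_latticePoint_le K
  obtain ⟨C, hC, htrace⟩ := exists_norm_traceForm_le β lam
  have hnonneg (j : ChooseBasisIndex ℤ (𝓞 K)) : 0 ≤ house (RingOfIntegers.basis K j : K) :=
    house_nonneg _
  refine ⟨C * (A * ∑ j, house (RingOfIntegers.basis K j : K)),
    mul_nonneg hC (mul_nonneg hA (sum_nonneg fun j _ => hnonneg j)), fun {D} j l => ?_⟩
  calc _ ≤ C * (house (latticePoint l : K) * house (RingOfIntegers.basis K j : K)) := by
        refine (htrace _).trans (mul_le_mul_of_nonneg_left ?_ hC)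
        simpa only [map_mul] using house_mul_le (latticePoint l : K) (RingOfIntegers.basis K j)
    _ ≤ C * (A * D * ∑ j, house (RingOfIntegers.basis K j : K)) := by
      gcongr
      · exact hnonneg j
      · exact hlattice l
      · exact single_le_sum (fun j _ => hnonneg j) (mem_univ j)
    _ = _ := by ring

variable {φ lam} {α : ι → K}

lemma exists_integral_exp_traceForm (hexp : ∀ i, Complex.exp (lam i) = φ (α i)) :
    ∃ δ : ℕ, 1 ≤ δ ∧ ∃ C : ℝ, 0 ≤ C ∧ ∀ (m : ℕ) (z : 𝓞 K), house (z : K) ≤ m →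
      ∃ y : 𝓞 K, φ y = δ ^ m * Complex.exp (traceForm β lam z) ∧
        house (y : K) ≤ Real.exp (C * m) := by
  choose M hM using fun i => exists_natCast_abs_trace_mul_le (β i)
  choose δ hδ C hC hpow using fun i => exists_integral_natCast_pow_mul_zpow (α i)
  refine ⟨∏ i, δ i ^ M i,
    Nat.succ_le_of_lt (prod_pos fun i _ => pow_pos (hδ i) _), ∑ i, C i * M i,
    sum_nonneg fun i _ => mul_nonneg (hC i) (M i).cast_nonneg,
    fun m z hz => ?_⟩
  choose y hy hhouse using fun i => hpow i (M i * m) _ (hM i z m hz)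
  refine ⟨∏ i, y i, ?_, house_le_of_forall_norm_embedding_le fun ψ => ?_⟩
  · simp only [map_prod, hy, map_mul, map_pow, map_natCast, map_zpow₀, ← hexp,
      ← Complex.exp_int_mul, traceForm, Complex.exp_sum, prod_mul_distrib, prod_pow, pow_mul,
      Nat.cast_prod, Nat.cast_pow]
  · simp only [map_prod, norm_prod]
    calc ∏ i, ‖ψ (y i)‖ ≤ ∏ i, Real.exp (C i * (M i * m : ℕ)) :=
          prod_le_prod (fun _ _ => norm_nonneg _) fun i _ =>
            (norm_embedding_le_house _ ψ).trans (hhouse i)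
      _ = _ := by
        simp only [← Real.exp_sum, sum_mul, Nat.cast_mul, mul_assoc]

variable (φ lam)

lemma exists_embedding_eq_sum_mul_traceForm :
    ∃ c : {σ : K ≃ₐ[ℚ] K // conjForm φ β lam σ ≠ 0} → ChooseBasisIndex ℤ (𝓞 K) → ℂ,
      ∀ σ (z : 𝓞 K), φ (σ.1 z) =
        ∑ j, c σ j * traceForm β lam (z * RingOfIntegers.basis K j) := by
  classical
  obtain ⟨b, hb⟩ := exists_sum_mul_embedding_basis_eq_ite (K := K)
  let conj (σ : K ≃ₐ[ℚ] K) : K →+* ℂ := φ.comp (σ : K →+* K)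
  have hconj : Function.Injective conj := fun σ τ h =>
    AlgEquiv.ext fun x => φ.injective (RingHom.congr_fun h x)
  refine ⟨fun σ j => b (conj σ.1) j / conjForm φ β lam σ, fun σ z => ?_⟩
  symm
  calc _ = ∑ ρ : {σ : K ≃ₐ[ℚ] K // conjForm φ β lam σ ≠ 0},
        (∑ j, b (conj σ.1) j * conj ρ.1 (RingOfIntegers.basis K j)) *
          (φ (ρ.1 z) * conjForm φ β lam ρ / conjForm φ β lam σ) := by
        simp only [traceForm_eq_sum_conjForm φ, mul_sum, sum_mul]
        rw [sum_comm]
        refine sum_congr rfl fun ρ _ => sum_congr rfl fun j _ => ?_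
        simp only [conj, map_mul, RingHom.comp_apply, RingHom.coe_coe]
        ring
    _ = φ (σ.1 z) * conjForm φ β lam σ / conjForm φ β lam σ := by
      simp only [hb, hconj.eq_iff, ← Subtype.ext_iff, ite_mul, one_mul, zero_mul, sum_ite_eq,
        mem_univ, if_true]
    _ = φ (σ.1 z) := mul_div_cancel_right₀ _ σ.2

variable {φ lam}

lemma nonempty_exponentialSystem (hexp : ∀ i, Complex.exp (lam i) = φ (α i))
    {σ₀ : K ≃ₐ[ℚ] K} (hσ₀ : conjForm φ β lam σ₀ ≠ 0) :
    Nonempty (ExponentialSystem K (ChooseBasisIndex ℤ (𝓞 K))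
      {σ : K ≃ₐ[ℚ] K // conjForm φ β lam σ ≠ 0}) := by
  obtain ⟨A, hA, hlattice⟩ := exists_house_latticePoint_le K
  obtain ⟨M, hM⟩ := exists_natCast_house_latticePoint_mul_le K
  obtain ⟨C₁, hC₁, hfreq⟩ := exists_norm_traceForm_latticePoint_mul_basis_le β lam
  obtain ⟨δ, hδ, C₂, hC₂, hvalue⟩ := exists_integral_exp_traceForm β hexp
  obtain ⟨c, hc⟩ := exists_embedding_eq_sum_mul_traceForm φ β lam
  choose value hvalue_eq hvalue_house using fun (D N : ℕ) l x => hvalue _ _ (hM D N l x)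
  obtain ⟨C₃, hC₃⟩ := Finite.exists_le fun p : _ × _ => ‖c p.1 p.2‖
  have _ := abs_nonneg C₃
  have _ : 0 ≤ C₂ * M := by positivity
  exact ⟨{
    emb := φ
    freq j l := traceForm β lam (latticePoint l * RingOfIntegers.basis K j)
    slope σ l := RingOfIntegers.mapRingHom (σ.1 : K →+* K) (latticePoint l)
    value l x := value _ _ l x
    toFreq j σ := φ (σ.1 (RingOfIntegers.basis K j)) * conjForm φ β lam σ
    toSlope := c
    den := δ ^ M
    C := 1 + A + C₁ + C₂ * M + |C₃|
    one_le_den := Nat.one_le_pow _ _ hδ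
    one_le_C := by linarith
    freq_eq j l := by
      rw [traceForm_eq_sum_conjForm φ]
      refine sum_congr rfl fun σ _ => ?_
      simp only [map_mul, RingOfIntegers.mapRingHom_apply, RingHom.coe_coe]
      ring
    emb_slope σ l := hc σ _
    emb_value l x := by
      rw [hvalue_eq, sum_mul_traceForm_mul_basis, pow_mul]
      push_cast
      rfl
    norm_toSlope_le σ j := by linarith [hC₃ (σ, j), le_abs_self C₃]
    norm_freq_le j l := (hfreq j l).trans (by gcongr; linarith)
    house_slope_le σ l :=
      (house_mapRingHom_le _ _).trans ((hlattice l).trans (by gcongr; linarith))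
    house_value_le l x := by
      refine (hvalue_house _ _ l x).trans (Real.exp_le_exp.mpr ?_)
      rw [Nat.cast_mul, ← mul_assoc, Nat.cast_mul]
      gcongr
      linarith
    exists_injective_slope := ⟨⟨σ₀, hσ₀⟩, fun D l l' h => latticePoint_injective <|
      RingOfIntegers.ext (σ₀.injective (congrArg RingOfIntegers.val h))⟩
  }⟩

theorem conjForm_eq_zero_of_exp_eq (hexp : ∀ i, Complex.exp (lam i) = φ (α i))
    (h : ∑ i, φ (β i) * lam i = 0) (σ : K ≃ₐ[ℚ] K) : conjForm φ β lam σ = 0 := by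
  by_contra hσ
  classical
  obtain ⟨d⟩ := nonempty_exponentialSystem β hexp hσ
  refine d.card_le_card.not_gt ?_
  rw [← Module.finrank_eq_card_chooseBasisIndex, RingOfIntegers.rank,
    ← IsGalois.card_aut_eq_finrank, Nat.card_eq_fintype_card]
  exact Fintype.card_subtype_lt (x := (1 : K ≃ₐ[ℚ] K)) (by simpa [conjForm] using h)

end LinearRelations

/-! ### Summing periodic functions against the harmonic series -/

section HarmonicSum

variable {q : ℕ} {R : Type*} [CommRing R]

/-- The partial sum of `Φ n / n` over `0 < n < N`; the junk value of `Φ 0 / 0` is zero. -/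
noncomputable def harmonicSum (Φ : ZMod q → ℂ) (N : ℕ) : ℂ := ∑ n ∈ range N, Φ n / n

lemma sum_Icc_one_eq_harmonicSum (Φ : ZMod q → ℂ) (N : ℕ) :
    ∑ n ∈ Icc 1 N, Φ n / n = harmonicSum Φ (N + 1) := by
  rw [harmonicSum, range_eq_Ico, sum_eq_sum_Ico_succ_bot N.succ_pos]
  simp [← Ico_add_one_right_eq_Icc]

variable [NeZero q]

lemma sum_range_zmod (Φ : ZMod q → R) : ∑ i ∈ range q, Φ i = ∑ a, Φ a :=
  sum_bij' (fun i _ => (i : ZMod q)) (fun a _ => a.val) (fun _ _ => mem_univ _)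
    (fun a _ => mem_range.mpr a.val_lt) (fun _ hi => ZMod.val_cast_of_lt (mem_range.mp hi))
    (fun a _ => a.natCast_zmod_val) fun _ _ => rfl

lemma periodic_sum_range_of_sum_eq_zero {Φ : ZMod q → R} (hΦ : ∑ a, Φ a = 0) :
    Function.Periodic (fun n : ℕ => ∑ i ∈ range n, Φ (i + 1 : ℕ)) q := by
  intro n
  have hshift : ∑ i ∈ range q, Φ (n + i + 1 : ℕ) = 0 := by
    calc _ = ∑ a : ZMod q, Φ (n + 1 + a) := by
          rw [← sum_range_zmod]
          exact sum_congr rfl fun i _ => by push_cast; ring_nf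
      _ = 0 := hΦ ▸ Equiv.sum_comp (Equiv.addLeft (n + 1 : ZMod q)) Φ
  simp only [sum_range_add, hshift, add_zero]

lemma exists_tendsto_harmonicSum_of_sum_eq_zero {Φ : ZMod q → ℂ} (hΦ : ∑ a, Φ a = 0) :
    ∃ l, Tendsto (harmonicSum Φ) atTop (𝓝 l) := by
  have hperiodic := periodic_sum_range_of_sum_eq_zero hΦ
  have hbounded (n : ℕ) : ‖∑ i ∈ range n, Φ (i + 1 : ℕ)‖ ≤
      ∑ m ∈ range q, ‖∑ i ∈ range m, Φ (i + 1 : ℕ)‖ := by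
    rw [← hperiodic.map_mod_nat n]
    exact single_le_sum (f := fun m => ‖∑ i ∈ range m, Φ (i + 1 : ℕ)‖)
      (fun _ _ => norm_nonneg _) (mem_range.mpr (Nat.mod_lt _ (NeZero.pos q)))
  have hanti : Antitone fun n : ℕ => 1 / ((n : ℝ) + 1) := fun _ _ => Nat.one_div_le_one_div
  obtain ⟨l, hl⟩ := cauchySeq_tendsto_of_complete <|
    hanti.cauchySeq_series_mul_of_tendsto_zero_of_bounded
      tendsto_one_div_add_atTop_nhds_zero_nat hbounded
  refine ⟨l, (tendsto_add_atTop_iff_nat 1).mp (hl.congr fun N => ?_)⟩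
  rw [harmonicSum, sum_range_succ']
  simp only [Nat.cast_zero, div_zero, add_zero]
  refine sum_congr rfl fun i _ => ?_
  rw [Complex.real_smul]
  push_cast
  ring

/-- The Fourier coefficient at `k` of `Φ` with respect to the additive character `ψ`. -/
def fourierCoeffZMod (ψ : AddChar (ZMod q) R) (Φ : ZMod q → R) (k : ZMod q) : R :=
  ∑ a, Φ a * ψ (k * a)

lemma fourierCoeffZMod_zero (ψ : AddChar (ZMod q) R) (Φ : ZMod q → R) :
    fourierCoeffZMod ψ Φ 0 = ∑ a, Φ a := by
  simp [fourierCoeffZMod]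

variable {ψ : AddChar (ZMod q) ℂ}

lemma eq_sum_fourierCoeffZMod (hψ : ψ.IsPrimitive) (Φ : ZMod q → ℂ) (x : ZMod q) :
    Φ x = (q : ℂ)⁻¹ * ∑ k, fourierCoeffZMod ψ Φ k * ψ (-k * x) := by
  have horth (a : ZMod q) : ∑ k, ψ (k * a) * ψ (-k * x) = if a = x then (q : ℂ) else 0 := by
    have hmul (k : ZMod q) : ψ (k * a) * ψ (-k * x) = ψ (k * (a - x)) := by
      rw [← ψ.map_add_eq_mul]
      ring_nf
    simp only [hmul, AddChar.sum_mulShift _ hψ, sub_eq_zero, ZMod.card, Nat.cast_ite,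
      Nat.cast_zero]
  have hsum : ∑ k, fourierCoeffZMod ψ Φ k * ψ (-k * x) =
      ∑ a, Φ a * ∑ k, ψ (k * a) * ψ (-k * x) := by
    simp only [fourierCoeffZMod, sum_mul, mul_sum, mul_assoc]
    exact sum_comm
  rw [hsum]
  simp only [horth, mul_ite, mul_zero, sum_ite_eq', mem_univ, if_true]
  field_simp [NeZero.ne q]

lemma hasSum_harmonic_mul_pow (hψ : ψ.IsPrimitive) (Φ : ZMod q → ℂ) {x : ℝ} (hx : |x| < 1) :
    HasSum (fun n : ℕ => Φ n / n * (x : ℂ) ^ n)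
      (-(q : ℂ)⁻¹ * ∑ k, fourierCoeffZMod ψ Φ k * Complex.log (1 - ψ (-k) * x)) := by
  have hnorm (k : ZMod q) : ‖ψ (-k) * x‖ < 1 := by simpa using hx
  have hlog := (hasSum_sum (s := univ) fun k _ =>
    (Complex.hasSum_taylorSeries_neg_log (hnorm k)).mul_left (fourierCoeffZMod ψ Φ k)).mul_left
      (q : ℂ)⁻¹
  convert! hlog using 1
  · funext n
    rw [eq_sum_fourierCoeffZMod hψ Φ n, mul_div_assoc, mul_assoc, sum_div, sum_mul]
    congr 1
    refine sum_congr rfl fun k _ => ?_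
    rw [mul_pow, ← ψ.map_nsmul_eq_pow, nsmul_eq_mul, mul_comm (n : ZMod q)]
    ring
  · simp only [mul_neg, neg_mul, sum_neg_distrib]

end HarmonicSum

section AbelSummation

lemma one_sub_mem_slitPlane {w : ℂ} (hw : ‖w‖ ≤ 1) (hne : w ≠ 1) : 1 - w ∈ Complex.slitPlane := by
  refine Or.inl ?_
  rw [Complex.sub_re, Complex.one_re, sub_pos]
  refine ((Complex.re_le_norm w).trans hw).lt_of_ne fun hre => hne (Complex.ext hre ?_)
  have hsq := Complex.sq_norm w
  rw [Complex.normSq_apply, hre] at hsq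
  have him : w.im * w.im ≤ 0 := by nlinarith [norm_nonneg w]
  simpa using le_antisymm him (mul_self_nonneg _)

lemma tendsto_log_one_sub_mul {w : ℂ} (hw : 1 - w ∈ Complex.slitPlane) :
    Tendsto (fun x : ℝ => Complex.log (1 - w * x)) (𝓝[<] 1) (𝓝 (Complex.log (1 - w))) := by
  have hcont : ContinuousAt (fun x : ℝ => Complex.log (1 - w * x)) 1 :=
    ContinuousAt.clog (by fun_prop) (by simpa using hw)
  simpa using hcont.tendsto.mono_left nhdsWithin_le_nhds

lemma tendsto_log_one_sub_atBot : Tendsto (fun x : ℝ => Real.log (1 - x)) (𝓝[<] 1) atBot := by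
  refine Real.tendsto_log_nhdsGT_zero.comp (tendsto_nhdsWithin_iff.mpr ⟨?_, ?_⟩)
  · have hcont : ContinuousAt (fun x : ℝ => 1 - x) 1 := by fun_prop
    simpa using hcont.tendsto.mono_left nhdsWithin_le_nhds
  · filter_upwards [self_mem_nhdsWithin] with x hx
    exact sub_pos.mpr (Set.mem_Iio.mp hx)

lemma eq_zero_of_tendsto_mul_log_one_sub {c l : ℂ}
    (h : Tendsto (fun x : ℝ => c * Complex.log (1 - x)) (𝓝[<] 1) (𝓝 l)) : c = 0 := by
  by_contra hc
  have hre := (Complex.continuous_re.tendsto _).comp (h.const_mul c⁻¹)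
  refine not_tendsto_nhds_of_tendsto_atBot tendsto_log_one_sub_atBot _ (hre.congr' ?_)
  filter_upwards [self_mem_nhdsWithin] with x hx
  have hx' : 0 ≤ 1 - x := sub_nonneg.mpr (le_of_lt hx)
  simp only [Function.comp, inv_mul_cancel_left₀ hc]
  rw [← Complex.ofReal_one, ← Complex.ofReal_sub, ← Complex.ofReal_log hx', Complex.ofReal_re]

variable {q : ℕ} [NeZero q] {ψ : AddChar (ZMod q) ℂ} {Φ : ZMod q → ℂ} {l : ℂ}

/-- The linear combination of logarithms of cyclotomic numbers that equals `-q` times the sum of the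
series `∑ Φ n / n` when this series converges. -/
noncomputable def logForm (ψ : AddChar (ZMod q) ℂ) (Φ : ZMod q → ℂ) : ℂ :=
  ∑ k : {k : ZMod q // k ≠ 0}, fourierCoeffZMod ψ Φ k * Complex.log (1 - ψ (-k))

lemma one_sub_apply_neg_mem_slitPlane (hψ : ψ.IsPrimitive) {k : ZMod q} (hk : k ≠ 0) :
    1 - ψ (-k) ∈ Complex.slitPlane :=
  one_sub_mem_slitPlane (ψ.norm_apply _).le
    ((hψ.zmod_char_eq_one_iff q _).not.mpr (neg_ne_zero.mpr hk))

lemma tendsto_sum_mul_log_one_sub (hψ : ψ.IsPrimitive)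
    (h : Tendsto (harmonicSum Φ) atTop (𝓝 l)) :
    Tendsto (fun x : ℝ => (∑ a, Φ a) * Complex.log (1 - x)) (𝓝[<] 1)
      (𝓝 (-(q : ℂ) * l - logForm ψ Φ)) := by
  have habel := tendsto_map'_iff.mp (Complex.tendsto_tsum_powerSeries_nhdsWithin_lt h)
  have hlog : Tendsto (fun x : ℝ => ∑ k : {k : ZMod q // k ≠ 0},
      fourierCoeffZMod ψ Φ k * Complex.log (1 - ψ (-k) * x)) (𝓝[<] 1) (𝓝 (logForm ψ Φ)) :=
    tendsto_finsetSum _ fun k _ =>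
      (tendsto_log_one_sub_mul (one_sub_apply_neg_mem_slitPlane hψ k.2)).const_mul _
  refine ((habel.const_mul (-(q : ℂ))).sub hlog).congr' ?_
  filter_upwards [Ico_mem_nhdsLT zero_lt_one] with x hx
  have hx' : |x| < 1 := by rw [abs_of_nonneg hx.1]; exact hx.2
  have hq : (q : ℂ) ≠ 0 := NeZero.ne _
  rw [Function.comp, (hasSum_harmonic_mul_pow hψ Φ hx').tsum_eq, neg_mul, neg_mul, mul_neg,
    neg_neg, mul_inv_cancel_left₀ hq, sub_eq_iff_eq_add, Fintype.sum_eq_add_sum_subtype_ne _ 0]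
  simp [fourierCoeffZMod_zero]

lemma sum_eq_zero_of_tendsto_harmonicSum (h : Tendsto (harmonicSum Φ) atTop (𝓝 l)) :
    ∑ a, Φ a = 0 :=
  eq_zero_of_tendsto_mul_log_one_sub (tendsto_sum_mul_log_one_sub (ZMod.isPrimitive_stdAddChar q) h)

lemma logForm_eq_of_tendsto_harmonicSum (hψ : ψ.IsPrimitive)
    (h : Tendsto (harmonicSum Φ) atTop (𝓝 l)) : logForm ψ Φ = -(q : ℂ) * l := by
  have hlim := tendsto_sum_mul_log_one_sub hψ h
  simp only [sum_eq_zero_of_tendsto_harmonicSum h, zero_mul] at hlim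
  exact (sub_eq_zero.mp (tendsto_nhds_unique hlim tendsto_const_nhds)).symm

end AbelSummation

section GaloisAction

variable {q : ℕ} {K : Type*} [Field K] (φ : K →+* ℂ) {χ : AddChar (ZMod q) (𝓞 K)}

/-- The complex-valued additive character obtained from `χ` by the embedding `φ`. -/
noncomputable def embedAddChar (χ : AddChar (ZMod q) (𝓞 K)) :
    AddChar (ZMod q) ℂ :=
  (φ.comp (algebraMap (𝓞 K) K) : 𝓞 K →* ℂ).compAddChar χ

lemma isPrimitive_embedAddChar (hχ : χ.IsPrimitive) : (embedAddChar φ χ).IsPrimitive :=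
  hχ.compMulHom_of_isPrimitive (φ.injective.comp RingOfIntegers.coe_injective)

variable [NeZero q]

lemma fourierCoeffZMod_embedAddChar (Φ : ZMod q → ℤ) (k : ZMod q) :
    fourierCoeffZMod (embedAddChar φ χ) (fun a => Φ a) k =
      φ (fourierCoeffZMod χ (fun a => Φ a) k : 𝓞 K) := by
  simp [fourierCoeffZMod, embedAddChar]

variable [NumberField K]

lemma apply_fourierCoeffZMod {σ : K ≃ₐ[ℚ] K} {u : (ZMod q)ˣ}
    (hσ : ∀ a, σ (χ a) = χ ((u⁻¹ : (ZMod q)ˣ) * a)) (Φ : ZMod q → ℤ) (k : ZMod q) :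
    σ (fourierCoeffZMod χ (fun a => Φ a) k : 𝓞 K) =
      (fourierCoeffZMod χ (fun a => Φ (u * a)) k : 𝓞 K) := by
  simp only [fourierCoeffZMod, map_sum, map_mul, map_intCast]
  rw [← Equiv.sum_comp (Units.mulLeft u)]
  refine sum_congr rfl fun a _ => ?_
  rw [Units.mulLeft_apply, hσ, mul_left_comm k, Units.inv_mul_cancel_left]

lemma logForm_unit_mul_eq_zero [IsGalois ℚ K] (hχ : χ.IsPrimitive) {σ : K ≃ₐ[ℚ] K}
    {u : (ZMod q)ˣ} (hσ : ∀ a, σ (χ a) = χ ((u⁻¹ : (ZMod q)ˣ) * a)) {Φ : ZMod q → ℤ}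
    (h : logForm (embedAddChar φ χ) (fun a => Φ a) = 0) :
    logForm (embedAddChar φ χ) (fun a => Φ (u * a)) = 0 := by
  have hexp (k : {k : ZMod q // k ≠ 0}) :
      Complex.exp (Complex.log (1 - embedAddChar φ χ (-k))) = φ (1 - χ (-k)) := by
    rw [Complex.exp_log (Complex.slitPlane_ne_zero
      (one_sub_apply_neg_mem_slitPlane (isPrimitive_embedAddChar φ hχ) k.2))]
    simp [embedAddChar]
  simp only [logForm, fourierCoeffZMod_embedAddChar] at h
  simpa only [logForm, conjForm, apply_fourierCoeffZMod hσ, ← fourierCoeffZMod_embedAddChar] using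
    conjForm_eq_zero_of_exp_eq _ hexp h σ

variable (K) in
lemma exists_isPrimitive_addChar_ringOfIntegers [IsCyclotomicExtension {q} ℚ K] :
    ∃ χ : AddChar (ZMod q) (𝓞 K), χ.IsPrimitive ∧
      ∀ u : (ZMod q)ˣ, ∃ σ : K ≃ₐ[ℚ] K, ∀ a, σ (χ a) = χ (u * a) := by
  have hζ := IsCyclotomicExtension.zeta_spec q ℚ K
  have hirr := Polynomial.cyclotomic.irreducible_rat (NeZero.pos q)
  refine ⟨AddChar.zmodChar q hζ.toInteger_isPrimitiveRoot.pow_eq_one,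
    AddChar.zmodChar_primitive_of_primitive_root q hζ.toInteger_isPrimitiveRoot, fun u => ?_⟩
  have hpow := hζ.pow_of_coprime _ (ZMod.val_coe_unit_coprime u)
  refine ⟨IsCyclotomicExtension.fromZetaAut hpow hirr, fun a => ?_⟩
  have hua : (u : ZMod q) * a = ((u : ZMod q).val * a.val : ℕ) := by simp
  rw [hua, AddChar.zmodChar_apply', AddChar.zmodChar_apply]
  simp only [map_pow, pow_mul]
  exact congrArg (· ^ a.val) (IsCyclotomicExtension.fromZetaAut_spec hpow hirr)

theorem tendsto_harmonicSum_unit_mul {Φ : ZMod q → ℤ}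
    (h : Tendsto (harmonicSum fun a : ZMod q => (Φ a : ℂ)) atTop (𝓝 0)) (u : (ZMod q)ˣ) :
    Tendsto (harmonicSum fun a : ZMod q => (Φ (u * a) : ℂ)) atTop (𝓝 0) := by
  have _ : IsCyclotomicExtension {q} ℚ (CyclotomicField q ℚ) :=
    CyclotomicField.isCyclotomicExtension q ℚ
  have _ : IsGalois ℚ (CyclotomicField q ℚ) := IsCyclotomicExtension.isGalois {q} ℚ _
  obtain ⟨φ⟩ : Nonempty (CyclotomicField q ℚ →+* ℂ) := inferInstance
  obtain ⟨χ, hχ, hgal⟩ :=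
    exists_isPrimitive_addChar_ringOfIntegers (q := q) (CyclotomicField q ℚ)
  obtain ⟨σ, hσ⟩ := hgal u⁻¹
  have hψ := isPrimitive_embedAddChar φ hχ
  have hsum : ∑ a : ZMod q, (Φ (u * a) : ℂ) = 0 :=
    (Equiv.sum_comp (Units.mulLeft u) fun a => (Φ a : ℂ)).trans
      (sum_eq_zero_of_tendsto_harmonicSum h)
  obtain ⟨l, hl⟩ := exists_tendsto_harmonicSum_of_sum_eq_zero hsum
  have hlog := logForm_unit_mul_eq_zero φ hχ hσ
    ((logForm_eq_of_tendsto_harmonicSum hψ h).trans (mul_zero _))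
  rw [logForm_eq_of_tendsto_harmonicSum hψ hl] at hlog
  have hl₀ : l = 0 := (mul_eq_zero.mp hlog).resolve_left (neg_ne_zero.mpr (NeZero.ne _))
  rwa [hl₀] at hl

end GaloisAction

/-! ### Dirichlet series at the edge of convergence -/

section Abel

open MeasureTheory

lemma norm_mul_cpow_le_of_norm_le {z : ℂ} {C δ T ε t : ℝ} (hε : 0 ≤ ε) (hδ : 0 ≤ δ) (hC : ‖z‖ ≤ C)
    (hT : 0 ≤ T) (hz : T < t → ‖z‖ ≤ δ) (ht : 1 ≤ t) :
    ‖z * (t : ℂ) ^ (-((ε : ℂ) + 1))‖ ≤ δ * t ^ (-(ε + 1)) + C * T * t ^ (-2 : ℝ) := by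
  have ht₀ : 0 < t := by linarith
  have hC₀ : 0 ≤ C := (norm_nonneg z).trans hC
  have hre : (-((ε : ℂ) + 1)).re = -(ε + 1) := by simp
  rw [norm_mul, Complex.norm_cpow_eq_rpow_re_of_pos ht₀, hre]
  rcases le_or_gt t T with htT | htT
  · have hpow : t ^ (-(ε + 1)) ≤ T * t ^ (-2 : ℝ) :=
      calc t ^ (-(ε + 1)) ≤ t ^ (1 + -2 : ℝ) := Real.rpow_le_rpow_of_exponent_le ht (by linarith)
        _ = t * t ^ (-2 : ℝ) := by rw [Real.rpow_add ht₀, Real.rpow_one]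
        _ ≤ T * t ^ (-2 : ℝ) := by gcongr
    calc ‖z‖ * t ^ (-(ε + 1)) ≤ C * (T * t ^ (-2 : ℝ)) := by gcongr
      _ ≤ _ := by rw [← mul_assoc]; exact le_add_of_nonneg_left (by positivity)
  · calc ‖z‖ * t ^ (-(ε + 1)) ≤ δ * t ^ (-(ε + 1)) := by gcongr; exact hz htT
      _ ≤ _ := le_add_of_nonneg_right (by positivity)

lemma norm_integral_mul_cpow_le {S : ℝ → ℂ} {C δ T ε : ℝ} (hε : 0 < ε) (hδ : 0 ≤ δ) (hT : 0 ≤ T)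
    (hC : ∀ t, ‖S t‖ ≤ C) (hS : ∀ t, T < t → ‖S t‖ ≤ δ) :
    ‖∫ t in Set.Ioi (1 : ℝ), S t * (t : ℂ) ^ (-((ε : ℂ) + 1))‖ ≤ δ / ε + C * T := by
  have hint (r : ℝ) (hr : r < -1) : IntegrableOn (fun t : ℝ => t ^ r) (Set.Ioi 1) :=
    integrableOn_Ioi_rpow_of_lt hr one_pos
  have hintε := (hint (-(ε + 1)) (by linarith)).const_mul δ
  have hint₂ := (hint (-2) (by norm_num)).const_mul (C * T)
  calc _ ≤ ∫ t in Set.Ioi (1 : ℝ), (δ * t ^ (-(ε + 1)) + C * T * t ^ (-2 : ℝ)) :=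
        norm_integral_le_of_norm_le (hintε.add hint₂) <|
          (ae_restrict_iff' measurableSet_Ioi).mpr <| Eventually.of_forall fun t ht =>
            norm_mul_cpow_le_of_norm_le hε.le hδ (hC t) hT (hS t) (Set.mem_Ioi.mp ht).le
    _ = δ / ε + C * T := by
        rw [integral_add hintε hint₂, integral_const_mul, integral_const_mul,
          integral_Ioi_rpow_of_lt (by linarith) one_pos,
          integral_Ioi_rpow_of_lt (by norm_num) one_pos, Real.one_rpow, Real.one_rpow]
        norm_num
        field_simp

lemma exists_norm_LSeries_le_of_tendsto_sum {g : ℕ → ℂ}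
    (hg : Tendsto (fun N => ∑ n ∈ Icc 1 N, g n) atTop (𝓝 0)) {δ : ℝ} (hδ : 0 < δ) :
    ∃ C : ℝ, ∀ ε : ℝ, 0 < ε → LSeriesSummable g ε → ‖LSeries g ε‖ ≤ δ + C * ε := by
  obtain ⟨C, hC⟩ := hg.norm.bddAbove_range
  have hbounded (N : ℕ) : ‖∑ n ∈ Icc 1 N, g n‖ ≤ C := hC ⟨N, rfl⟩
  obtain ⟨T, hT⟩ := Metric.tendsto_atTop.mp hg δ hδ
  have hsmall (t : ℝ) (ht : (T : ℝ) < t) : ‖∑ n ∈ Icc 1 ⌊t⌋₊, g n‖ ≤ δ := by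
    simpa only [dist_zero_right] using (hT ⌊t⌋₊ (Nat.le_floor ht.le)).le
  refine ⟨C * T, fun ε hε hsum => ?_⟩
  rw [LSeries_eq_mul_integral g le_rfl (by simpa using hε) hsum
    (.of_bound C (.of_forall fun N => by simpa using hbounded N)), norm_mul, Complex.norm_real,
    Real.norm_of_nonneg hε.le]
  calc _ ≤ ε * (δ / ε + C * T) := by
        gcongr
        exact norm_integral_mul_cpow_le hε hδ.le T.cast_nonneg (fun t => hbounded _) hsmall
    _ = δ + C * T * ε := by field_simp

theorem tendsto_LSeries_nhdsGT_zero_of_tendsto_sum {g : ℕ → ℂ}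
    (hg : Tendsto (fun N => ∑ n ∈ Icc 1 N, g n) atTop (𝓝 0))
    (hsum : ∀ ε : ℝ, 0 < ε → LSeriesSummable g ε) :
    Tendsto (fun ε : ℝ => LSeries g ε) (𝓝[>] 0) (𝓝 0) := by
  rw [Metric.tendsto_nhds]
  intro δ hδ
  obtain ⟨C, hC⟩ := exists_norm_LSeries_le_of_tendsto_sum hg (half_pos hδ)
  have hlim : Tendsto (fun ε : ℝ => δ / 2 + C * ε) (𝓝[>] 0) (𝓝 (δ / 2 + C * 0)) :=
    tendsto_nhdsWithin_of_tendsto_nhds (ContinuousAt.tendsto (by fun_prop))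
  have hev := hlim.eventually_lt_const (show δ / 2 + C * 0 < δ by linarith)
  filter_upwards [hev, self_mem_nhdsWithin] with ε hlt hε
  simpa only [dist_zero_right] using (hC ε hε (hsum ε hε)).trans_lt hlt

lemma LSeries_term_div_natCast (g : ℕ → ℂ) (s : ℂ) (n : ℕ) :
    LSeries.term (fun n => g n / n) (s - 1) n = LSeries.term g s n := by
  rcases eq_or_ne n 0 with rfl | hn
  · simp
  · have hn₀ : (n : ℂ) ≠ 0 := Nat.cast_ne_zero.mpr hn
    rw [LSeries.term_of_ne_zero hn, LSeries.term_of_ne_zero hn, Complex.cpow_sub _ _ hn₀,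
      Complex.cpow_one]
    field_simp

theorem tendsto_LSeries_nhdsGT_one_of_tendsto_harmonicSum {q : ℕ} [NeZero q] {Φ : ZMod q → ℂ}
    (hΦ : Tendsto (harmonicSum Φ) atTop (𝓝 0)) :
    Tendsto (fun s : ℝ => LSeries (fun n => Φ n) s) (𝓝[>] 1) (𝓝 0) := by
  have hterm (s : ℂ) : LSeries.term (fun n => Φ n / n) (s - 1) = LSeries.term (fun n => Φ n) s :=
    funext fun n => LSeries_term_div_natCast _ s n
  have hsum (ε : ℝ) (hε : 0 < ε) : LSeriesSummable (fun n => Φ n / n) ε := by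
    rw [LSeriesSummable, ← add_sub_cancel_right (ε : ℂ) 1, hterm]
    exact ZMod.LSeriesSummable_of_one_lt_re Φ (by simpa using hε)
  have hpartial : Tendsto (fun N : ℕ => ∑ n ∈ Icc 1 N, Φ n / n) atTop (𝓝 0) := by
    simpa only [sum_Icc_one_eq_harmonicSum] using (tendsto_add_atTop_iff_nat 1).mpr hΦ
  have hshift : Tendsto (fun s : ℝ => s - 1) (𝓝[>] 1) (𝓝[>] 0) :=
    tendsto_nhdsWithin_iff.mpr ⟨tendsto_nhdsWithin_of_tendsto_nhds <| by
      simpa using (continuous_sub_right (1 : ℝ)).tendsto 1,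
      eventually_mem_nhdsWithin.mono fun s hs => sub_pos.mpr (Set.mem_Ioi.mp hs)⟩
  refine ((tendsto_LSeries_nhdsGT_zero_of_tendsto_sum hpartial hsum).comp hshift).congr fun s => ?_
  rw [Function.comp_apply, Complex.ofReal_sub, Complex.ofReal_one, LSeries, hterm, LSeries]

end Abel

section Factored

variable {q : ℕ}

lemma one_mem_factoredNumbers (s : Finset ℕ) : 1 ∈ Nat.factoredNumbers s :=
  Nat.mem_factoredNumbers'.mpr fun _ hp hdvd => absurd (Nat.dvd_one.mp hdvd) hp.ne_one

lemma mem_factoredNumbers_of_mem {s : Finset ℕ} {p : ℕ} (hp : p.Prime) (hps : p ∈ s) :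
    p ∈ Nat.factoredNumbers s :=
  Nat.mem_factoredNumbers'.mpr fun _ hr hdvd => (Nat.prime_dvd_prime_iff_eq hr hp).mp hdvd ▸ hps

lemma exists_coprime_mul_mem_factoredNumbers (hq : q ≠ 0) {n : ℕ} (hn : n ≠ 0) :
    ∃ a b : ℕ, a * b = n ∧ a.Coprime q ∧ b ∈ Nat.factoredNumbers q.primeFactors := by
  induction n using induction_on_primes with
  | zero => exact absurd rfl hn
  | one => exact ⟨1, 1, one_mul 1, q.coprime_one_left, one_mem_factoredNumbers _⟩
  | prime_mul p n hp ih =>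
    obtain ⟨a, b, rfl, ha, hb⟩ := ih (right_ne_zero_of_mul hn)
    by_cases hpq : p ∣ q
    · exact ⟨a, p * b, mul_left_comm .., ha, Nat.mul_mem_factoredNumbers
        (mem_factoredNumbers_of_mem hp (Nat.mem_primeFactors.mpr ⟨hp, hpq, hq⟩)) hb⟩
    · exact ⟨p * a, b, mul_assoc .., ((hp.coprime_iff_not_dvd).mpr hpq).mul_left ha, hb⟩

lemma coprime_of_mem_factoredNumbers {a b : ℕ} (ha : a.Coprime q)
    (hb : b ∈ Nat.factoredNumbers q.primeFactors) : a.Coprime b := by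
  refine Nat.coprime_of_dvd fun p hp hpa hpb => ?_
  have hpq := Nat.dvd_of_mem_primeFactors (Nat.mem_factoredNumbers'.mp hb p hp hpb)
  exact hp.ne_one (Nat.dvd_one.mp (ha ▸ Nat.dvd_gcd hpa hpq))

lemma eq_of_mul_eq_mul_of_mem_factoredNumbers {a b a' b' : ℕ} (hne : a * b ≠ 0)
    (ha : a.Coprime q) (ha' : a'.Coprime q) (hb : b ∈ Nat.factoredNumbers q.primeFactors)
    (hb' : b' ∈ Nat.factoredNumbers q.primeFactors) (h : a' * b' = a * b) :
    a' = a ∧ b' = b := by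
  obtain rfl : a' = a := Nat.dvd_antisymm
    ((coprime_of_mem_factoredNumbers ha' hb).dvd_of_dvd_mul_right (h ▸ dvd_mul_right a' b'))
    ((coprime_of_mem_factoredNumbers ha hb').dvd_of_dvd_mul_right (h ▸ dvd_mul_right a b))
  exact ⟨rfl, mul_left_cancel₀ (left_ne_zero_of_mul hne) h⟩

/-- The restriction of a function on `ZMod q` to the positive integers all of whose prime factors
divide `q`, extended by zero. -/
noncomputable def factoredPart (Φ : ZMod q → ℂ) : ℕ → ℂ :=
  (Nat.factoredNumbers q.primeFactors).indicator fun n => Φ n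

variable [NeZero q]

lemma LSeriesSummable_factoredPart (Φ : ZMod q → ℂ) {s : ℂ} (hs : 1 < s.re) :
    LSeriesSummable (factoredPart Φ) s :=
  (ZMod.LSeriesSummable_of_one_lt_re Φ hs).norm.of_norm_bounded fun _ =>
    LSeries.norm_term_le s (norm_indicator_le_norm_self _ _)

lemma convolution_factoredPart (χ : DirichletCharacter ℂ q) {F : ZMod q → ℂ}
    (hF : ∀ (u : (ZMod q)ˣ) (x : ZMod q), F (u * x) = χ u * F x) {n : ℕ} (hn : n ≠ 0) :
    LSeries.convolution (fun n => χ n) (factoredPart F) n = F n := by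
  obtain ⟨a, b, rfl, ha, hb⟩ := exists_coprime_mul_mem_factoredNumbers (NeZero.ne q) hn
  rw [LSeries.convolution_def]
  dsimp only
  rw [sum_eq_single (a, b)]
  · have hFa := hF (ZMod.unitOfCoprime a ha) b
    rw [ZMod.coe_unitOfCoprime] at hFa
    rw [factoredPart, Set.indicator_of_mem hb, ← hFa, Nat.cast_mul]
  · rintro ⟨a', b'⟩ hmem hne
    by_contra hterm
    have ha' : a'.Coprime q := by
      by_contra hnot
      exact left_ne_zero_of_mul hterm
        (χ.map_nonunit fun hu => hnot ((ZMod.isUnit_iff_coprime _ _).mp hu))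
    have hb' := Set.mem_of_indicator_ne_zero (right_ne_zero_of_mul hterm)
    exact hne (Prod.ext_iff.mpr (eq_of_mul_eq_mul_of_mem_factoredNumbers hn ha ha' hb hb'
      (Nat.mem_divisorsAntidiagonal.mp hmem).1))
  · exact fun hnot => absurd (Nat.mem_divisorsAntidiagonal.mpr ⟨rfl, hn⟩) hnot

theorem LSeries_eq_mul_LSeries_factoredPart (χ : DirichletCharacter ℂ q) {F : ZMod q → ℂ}
    (hF : ∀ (u : (ZMod q)ˣ) (x : ZMod q), F (u * x) = χ u * F x) {s : ℂ} (hs : 1 < s.re) :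
    LSeries (fun n => F n) s = LSeries (fun n => χ n) s * LSeries (factoredPart F) s := by
  rw [← LSeries_convolution' (ZMod.LSeriesSummable_of_one_lt_re χ hs)
    (LSeriesSummable_factoredPart F hs)]
  exact LSeries_congr (fun hn => (convolution_factoredPart χ hF hn).symm) s

end Factored

section InverseLSeries

lemma tendsto_ofReal_nhdsGT_one : Tendsto (fun s : ℝ => (s : ℂ)) (𝓝[>] 1) (𝓝[≠] 1) := by
  refine tendsto_nhdsWithin_iff.mpr ⟨tendsto_nhdsWithin_of_tendsto_nhds ?_, ?_⟩
  · simpa using Complex.continuous_ofReal.tendsto 1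
  · filter_upwards [self_mem_nhdsWithin] with s hs
    simpa using (Set.mem_Ioi.mp hs).ne'

variable {q : ℕ}

lemma prod_one_sub_inv_primeFactors_ne_zero {K : Type*} [Field K] [CharZero K] :
    ∏ p ∈ q.primeFactors, (1 - (p : K)⁻¹) ≠ 0 := by
  refine prod_ne_zero_iff.mpr fun p hp => sub_ne_zero.mpr fun h => ?_
  exact (Nat.prime_of_mem_primeFactors hp).ne_one (by exact_mod_cast inv_eq_one.mp h.symm)

variable [NeZero q]

lemma tendsto_inv_LFunctionTrivChar :
    Tendsto (fun s : ℝ => (DirichletCharacter.LFunctionTrivChar q s)⁻¹) (𝓝[>] 1) (𝓝 0) := by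
  have hinv := ((DirichletCharacter.LFunctionTrivChar_residue_one (N := q)).comp
    tendsto_ofReal_nhdsGT_one).inv₀ prod_one_sub_inv_primeFactors_ne_zero
  have hsub : Tendsto (fun s : ℝ => (s : ℂ) - 1) (𝓝[>] 1) (𝓝 0) := by
    simpa using (tendsto_nhdsWithin_iff.mp tendsto_ofReal_nhdsGT_one).1.sub_const 1
  refine (zero_mul (_ : ℂ) ▸ hsub.mul hinv).congr' ?_
  filter_upwards [self_mem_nhdsWithin] with s hs
  have hs₀ : (s : ℂ) - 1 ≠ 0 := sub_ne_zero.mpr (by exact_mod_cast (Set.mem_Ioi.mp hs).ne')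
  rw [Function.comp_apply, mul_inv, mul_inv_cancel_left₀ hs₀]

lemma exists_tendsto_inv_LSeries (χ : DirichletCharacter ℂ q) :
    ∃ c, Tendsto (fun s : ℝ => (LSeries (fun n => χ n) s)⁻¹) (𝓝[>] 1) (𝓝 c) := by
  suffices h : ∃ c, Tendsto (fun s : ℝ => (χ.LFunction s)⁻¹) (𝓝[>] 1) (𝓝 c) by
    obtain ⟨c, hc⟩ := h
    refine ⟨c, hc.congr' ?_⟩
    filter_upwards [self_mem_nhdsWithin] with s hs
    rw [χ.LFunction_eq_LSeries (by simpa using hs)]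
  rcases eq_or_ne χ 1 with rfl | hχ
  · exact ⟨0, tendsto_inv_LFunctionTrivChar⟩
  · exact ⟨(χ.LFunction 1)⁻¹, Tendsto.inv₀
      (((DirichletCharacter.differentiable_LFunction hχ).continuous.tendsto 1).comp
        (tendsto_nhdsWithin_iff.mp tendsto_ofReal_nhdsGT_one).1)
      (DirichletCharacter.LFunction_apply_one_ne_zero hχ)⟩

end InverseLSeries

section CharComponent

variable {q : ℕ} [NeZero q]

/-- The component of `Φ` on which multiplication by units acts through the character `χ`, scaled by
the number of units. -/
noncomputable def charComponent (χ : DirichletCharacter ℂ q) (Φ : ZMod q → ℂ) (x : ZMod q) : ℂ :=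
  ∑ u : (ZMod q)ˣ, χ⁻¹ u * Φ (u * x)

lemma charComponent_unit_mul (χ : DirichletCharacter ℂ q) (Φ : ZMod q → ℂ) (k : (ZMod q)ˣ)
    (x : ZMod q) : charComponent χ Φ (k * x) = χ k * charComponent χ Φ x := by
  have hk : χ k * χ⁻¹ k = 1 := by
    rw [← MulChar.mul_apply, mul_inv_cancel, MulChar.one_apply_coe]
  calc charComponent χ Φ (k * x) = ∑ u : (ZMod q)ˣ, χ k * (χ⁻¹ (u * k) * Φ (u * k * x)) := by
        refine sum_congr rfl fun u _ => ?_
        rw [map_mul, ← mul_assoc (u : ZMod q)]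
        linear_combination (-(χ⁻¹ u) * Φ (u * k * x)) * hk
    _ = χ k * charComponent χ Φ x := by
        rw [charComponent, mul_sum]
        exact Equiv.sum_comp (Equiv.mulRight k)
          fun u : (ZMod q)ˣ => χ k * (χ⁻¹ u * Φ (u * x))

lemma sum_charComponent (Φ : ZMod q → ℂ) (x : ZMod q) :
    ∑ χ : DirichletCharacter ℂ q, charComponent χ Φ x = q.totient * Φ x := by
  have horthogonal (u : (ZMod q)ˣ) :
      ∑ χ : DirichletCharacter ℂ q, χ⁻¹ (u : ZMod q) = if u = 1 then (q.totient : ℂ) else 0 := by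
    calc _ = ∑ χ : DirichletCharacter ℂ q, χ (u : ZMod q) :=
          Equiv.sum_comp (Equiv.inv _) fun χ : DirichletCharacter ℂ q => χ (u : ZMod q)
      _ = _ := by simp only [DirichletCharacter.sum_characters_eq, Units.val_eq_one]
  simp only [charComponent]
  rw [sum_comm]
  simp only [← sum_mul, horthogonal, ite_mul, zero_mul, sum_ite_eq', mem_univ, if_true,
    Units.val_one, one_mul]

variable {Φ : ZMod q → ℂ}

lemma tendsto_harmonicSum_charComponent
    (hΦ : ∀ u : (ZMod q)ˣ, Tendsto (harmonicSum fun x : ZMod q => Φ (u * x)) atTop (𝓝 0))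
    (χ : DirichletCharacter ℂ q) : Tendsto (harmonicSum (charComponent χ Φ)) atTop (𝓝 0) := by
  have hsum : Tendsto
      (fun N => ∑ u : (ZMod q)ˣ, χ⁻¹ u * harmonicSum (fun x : ZMod q => Φ (u * x)) N)
      atTop (𝓝 (∑ u : (ZMod q)ˣ, χ⁻¹ u * 0)) :=
    tendsto_finsetSum _ fun u _ => (hΦ u).const_mul _
  simp only [mul_zero, sum_const_zero] at hsum
  refine hsum.congr fun N => ?_
  simp only [harmonicSum, charComponent, mul_sum, sum_div, mul_div_assoc]
  exact sum_comm

lemma tendsto_LSeries_factoredPart_charComponent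
    (hΦ : ∀ u : (ZMod q)ˣ, Tendsto (harmonicSum fun x : ZMod q => Φ (u * x)) atTop (𝓝 0))
    (χ : DirichletCharacter ℂ q) :
    Tendsto (fun s : ℝ => LSeries (factoredPart (charComponent χ Φ)) s) (𝓝[>] 1) (𝓝 0) := by
  obtain ⟨c, hc⟩ := exists_tendsto_inv_LSeries χ
  have hprod := hc.mul (tendsto_LSeries_nhdsGT_one_of_tendsto_harmonicSum
    (tendsto_harmonicSum_charComponent hΦ χ))
  rw [mul_zero] at hprod
  refine hprod.congr' ?_
  filter_upwards [self_mem_nhdsWithin] with s hs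
  have hre : 1 < (s : ℂ).re := by simpa using hs
  have hne : LSeries (fun n => χ n) s ≠ 0 := by
    rw [← χ.LFunction_eq_LSeries hre]
    exact χ.LFunction_ne_zero_of_one_le_re (.inr fun h => by simp [h] at hre) hre.le
  rw [LSeries_eq_mul_LSeries_factoredPart χ (charComponent_unit_mul χ Φ) hre,
    inv_mul_cancel_left₀ hne]

theorem tendsto_LSeries_factoredPart
    (hΦ : ∀ u : (ZMod q)ˣ, Tendsto (harmonicSum fun x : ZMod q => Φ (u * x)) atTop (𝓝 0)) :
    Tendsto (fun s : ℝ => LSeries (factoredPart Φ) s) (𝓝[>] 1) (𝓝 0) := by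
  have hsum : Tendsto (fun s : ℝ => (q.totient : ℂ)⁻¹ * ∑ χ : DirichletCharacter ℂ q,
      LSeries (factoredPart (charComponent χ Φ)) s) (𝓝[>] 1)
      (𝓝 ((q.totient : ℂ)⁻¹ * ∑ χ : DirichletCharacter ℂ q, 0)) :=
    (tendsto_finsetSum _ fun χ _ =>
      tendsto_LSeries_factoredPart_charComponent hΦ χ).const_mul _
  simp only [mul_zero, sum_const_zero] at hsum
  refine hsum.congr' ?_
  filter_upwards [self_mem_nhdsWithin] with s hs
  have htotient : (q.totient : ℂ) ≠ 0 :=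
    Nat.cast_ne_zero.mpr (Nat.totient_pos.mpr (NeZero.pos q)).ne'
  rw [← LSeries_sum fun χ _ => LSeriesSummable_factoredPart _ (by simpa using hs),
    inv_mul_eq_iff_eq_mul₀ htotient, ← LSeries_smul]
  refine LSeries_congr (fun {n} _ => ?_) _
  by_cases hn : n ∈ Nat.factoredNumbers q.primeFactors
  · simpa [factoredPart, hn] using sum_charComponent Φ n
  · simp [factoredPart, hn]

end CharComponent

/-! ### A necessary condition for the conjecture to fail -/

lemma hasSum_indicator_inv_factoredNumbers {s : Finset ℕ} (hs : ∀ p ∈ s, p.Prime) :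
    HasSum ((Nat.factoredNumbers s).indicator fun n : ℕ => (n : ℝ)⁻¹)
      (∏ p ∈ s, (1 - (p : ℝ)⁻¹)⁻¹) := by
  let inv : ℕ →* ℝ :=
    { toFun := fun n => (n : ℝ)⁻¹
      map_one' := by simp
      map_mul' := fun a b => by rw [Nat.cast_mul, mul_inv] }
  have hlt {p : ℕ} (hp : p.Prime) : ‖inv p‖ < 1 := by
    simpa [inv] using inv_lt_one_of_one_lt₀ (Nat.one_lt_cast (α := ℝ).mpr hp.one_lt)
  have h := (EulerProduct.summable_and_hasSum_factoredNumbers_prod_filter_prime_geometric hlt s).2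
  rw [filter_true_of_mem hs] at h
  exact hasSum_subtype_iff_indicator.mp h

lemma natCast_eq_totient_mul_prod (q : ℕ) :
    (q : ℝ) = q.totient * ∏ p ∈ q.primeFactors, (1 - (p : ℝ)⁻¹)⁻¹ := by
  have htotient : (q.totient : ℝ) = q * ∏ p ∈ q.primeFactors, (1 - (p : ℝ)⁻¹) := by
    simpa using congrArg (Rat.cast (K := ℝ)) (Nat.totient_eq_mul_prod_factors q)
  rw [htotient, prod_inv_distrib, mul_inv_cancel_right₀ prod_one_sub_inv_primeFactors_ne_zero]

lemma two_le_prod_iff_two_mul_totient_le {q : ℕ} (hq : 0 < q) :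
    2 ≤ ∏ p ∈ q.primeFactors, (1 - (p : ℝ)⁻¹)⁻¹ ↔ 2 * q.totient ≤ q := by
  have htotient : (0 : ℝ) < q.totient := Nat.cast_pos.mpr (Nat.totient_pos.mpr hq)
  rw [← Nat.cast_le (α := ℝ), Nat.cast_mul, Nat.cast_two, mul_comm]
  conv_rhs => rw [natCast_eq_totient_mul_prod q]
  exact (mul_le_mul_iff_right₀ htotient).symm

section EulerFactor

variable {q : ℕ} {Φ : ZMod q → ℂ}

lemma norm_term_factoredPart_le (hΦ : ∀ a, ‖Φ a‖ ≤ 1) {s : ℝ} (hs : 1 ≤ s) (n : ℕ) :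
    ‖LSeries.term (factoredPart Φ) s n‖ ≤
      (Nat.factoredNumbers q.primeFactors).indicator (fun n : ℕ => (n : ℝ)⁻¹) n := by
  rcases Nat.eq_zero_or_pos n with rfl | hn
  · simpa using Set.indicator_nonneg (fun _ _ => by positivity) _
  by_cases hmem : n ∈ Nat.factoredNumbers q.primeFactors
  · have hpow : (n : ℝ) ≤ (n : ℝ) ^ s :=
      Real.self_le_rpow_of_one_le (Nat.one_le_cast.mpr hn) hs
    rw [LSeries.norm_term_eq, if_neg hn.ne', factoredPart, Set.indicator_of_mem hmem,
      Set.indicator_of_mem hmem, Complex.ofReal_re, inv_eq_one_div]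
    gcongr
    exact hΦ n
  · simp [LSeries.norm_term_eq, factoredPart, hmem]

variable [NeZero q]

lemma two_sub_prod_le_norm_LSeries_factoredPart (hone : ‖Φ 1‖ = 1) (hΦ : ∀ a, ‖Φ a‖ ≤ 1) {s : ℝ}
    (hs : 1 < s) :
    2 - ∏ p ∈ q.primeFactors, (1 - (p : ℝ)⁻¹)⁻¹ ≤ ‖LSeries (factoredPart Φ) s‖ := by
  set term := LSeries.term (factoredPart Φ) s with hterm
  have hfirst : ‖term 1‖ = 1 := by
    simp [hterm, factoredPart, one_mem_factoredNumbers, hone]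
  have hrest : ‖∑' n, if n = 1 then 0 else term n‖ ≤
      ∏ p ∈ q.primeFactors, (1 - (p : ℝ)⁻¹)⁻¹ - 1 := by
    refine tsum_of_norm_bounded ((hasSum_indicator_inv_factoredNumbers fun _ =>
      Nat.prime_of_mem_primeFactors).sub (hasSum_ite_eq 1 (1 : ℝ))) fun n => ?_
    rcases eq_or_ne n 1 with rfl | hn
    · simp [one_mem_factoredNumbers]
    · simpa [hn] using norm_term_factoredPart_le hΦ hs.le n
  have hsplit : LSeries (factoredPart Φ) s = term 1 + ∑' n, if n = 1 then 0 else term n :=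
    Summable.tsum_eq_add_tsum_ite (LSeriesSummable_factoredPart Φ (by simpa using hs)) 1
  linarith [hsplit ▸ norm_sub_le_norm_add (term 1) (∑' n, if n = 1 then 0 else term n)]

theorem two_mul_totient_le_of_tendsto_harmonicSum {Φ : ZMod q → ℤ} (hone : |Φ 1| = 1)
    (hΦ : ∀ a, |Φ a| ≤ 1)
    (h : Tendsto (harmonicSum fun a : ZMod q => (Φ a : ℂ)) atTop (𝓝 0)) :
    2 * q.totient ≤ q := by
  have hnorm (a : ZMod q) : ‖(Φ a : ℂ)‖ = |Φ a| := by rw [Complex.norm_intCast, Int.cast_abs]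
  have hlim := tendsto_zero_iff_norm_tendsto_zero.mp <|
    tendsto_LSeries_factoredPart (Φ := fun a => (Φ a : ℂ)) (tendsto_harmonicSum_unit_mul h)
  rw [← two_le_prod_iff_two_mul_totient_le (NeZero.pos q), ← sub_nonpos]
  refine ge_of_tendsto hlim ?_
  filter_upwards [self_mem_nhdsWithin] with s hs
  refine two_sub_prod_le_norm_LSeries_factoredPart ?_ (fun a => ?_) hs
  · rw [hnorm, hone, Int.cast_one]
  · rw [hnorm]
    exact_mod_cast hΦ a

end EulerFactor

section ErdosConjectureFalse

variable {q : ℕ} {f : ℕ → ℤ}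

lemma apply_val_add_of_periodic (hf : ∀ n : ℕ, 1 ≤ n → f (n + q) = f n) {n : ℕ} (hn : 1 ≤ n) :
    f ((n : ZMod q).val + q) = f n := by
  have hmul (k m : ℕ) (hm : 1 ≤ m) : f (m + q * k) = f m := by
    induction k with
    | zero => rfl
    | succ k ih => rw [Nat.mul_succ, ← add_assoc, hf _ (by omega), ih]
  rcases q.eq_zero_or_pos with rfl | hq
  · rfl
  · rw [ZMod.val_natCast, ← hmul (n / q) _ (by omega), add_right_comm, Nat.mod_add_div, hf n hn]

lemma IsErdosian.abs_le_one (hf : IsErdosian q f) {n : ℕ} (hn : 1 ≤ n) : |f n| ≤ 1 := by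
  by_cases hdvd : q ∣ n
  · simp [hf.2.2 n hn hdvd]
  · rcases hf.2.1 n hn hdvd with h | h <;> simp [h]

theorem two_mul_totient_le_of_erdosConjectureFalse (hq : 1 < q) (h : ErdosConjectureFalse q) :
    2 * q.totient ≤ q := by
  obtain ⟨f, hf, hlim⟩ := h
  have _ : NeZero q := ⟨by omega⟩
  -- Shifting the representatives by `q` avoids the unconstrained value `f 0`.
  set Φ : ZMod q → ℤ := fun a => f (a.val + q)
  have hΦf {n : ℕ} (hn : 1 ≤ n) : Φ n = f n := apply_val_add_of_periodic hf.1 hn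
  refine two_mul_totient_le_of_tendsto_harmonicSum (Φ := Φ) ?_
    (fun a => hf.abs_le_one (by omega)) ?_
  · have hone : ¬ q ∣ 1 := Nat.not_dvd_of_pos_of_lt one_pos hq
    rw [← Nat.cast_one, hΦf le_rfl]
    rcases hf.2.1 1 le_rfl hone with h | h <;> simp [h]
  · refine (tendsto_add_atTop_iff_nat 1).mp ?_
    simp only [← sum_Icc_one_eq_harmonicSum]
    refine (Complex.ofReal_zero ▸ (Complex.continuous_ofReal.tendsto 0).comp hlim).congr fun N => ?_
    rw [Function.comp_apply, Complex.ofReal_sum]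
    refine sum_congr rfl fun n hn => ?_
    rw [hΦf (mem_Icc.mp hn).1]
    push_cast
    rfl

end ErdosConjectureFalse

/-! ### The density of moduli with `2 * φ(q) ≤ q` -/

section LargePrimeSum

lemma inv_one_sub_inv_le_exp {x : ℝ} (hx : 1 < x) : (1 - x⁻¹)⁻¹ ≤ Real.exp (1 / (x - 1)) := by
  have hx₁ : x - 1 ≠ 0 := by linarith
  calc (1 - x⁻¹)⁻¹ = 1 / (x - 1) + 1 := by field_simp; ring
    _ ≤ _ := Real.add_one_le_exp _

lemma one_le_inv_one_sub_inv {x : ℝ} (hx : 1 < x) : 1 ≤ (1 - x⁻¹)⁻¹ := by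
  have hpos : 0 < x⁻¹ := by positivity
  exact one_le_inv_iff₀.mpr ⟨sub_pos.mpr (inv_lt_one_of_one_lt₀ hx), by linarith⟩

/-- The sum of `1 / (p - 1)` over the prime factors `p ≥ y` of `q`, which bounds the logarithm of
the contribution of these primes to `q / φ(q)`. -/
noncomputable def largePrimeSum (y q : ℕ) : ℝ := ∑ p ∈ q.primeFactors with y ≤ p, 1 / ((p : ℝ) - 1)

lemma one_lt_cast_of_mem_primeFactors {p q : ℕ} (hp : p ∈ q.primeFactors) : (1 : ℝ) < p :=
  Nat.one_lt_cast.mpr (Nat.prime_of_mem_primeFactors hp).one_lt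

lemma largePrimeSum_nonneg (y q : ℕ) : 0 ≤ largePrimeSum y q :=
  sum_nonneg fun _ hp => one_div_nonneg.mpr <|
    sub_nonneg.mpr (one_lt_cast_of_mem_primeFactors (mem_filter.mp hp).1).le

lemma prod_inv_one_sub_inv_le_exp_largePrimeSum (y q : ℕ) :
    ∏ p ∈ q.primeFactors with y ≤ p, (1 - (p : ℝ)⁻¹)⁻¹ ≤ Real.exp (largePrimeSum y q) := by
  rw [largePrimeSum, Real.exp_sum]
  have hone {p : ℕ} (hp : p ∈ {p ∈ q.primeFactors | y ≤ p}) : (1 : ℝ) < p :=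
    one_lt_cast_of_mem_primeFactors (mem_filter.mp hp).1
  exact prod_le_prod (fun p hp => zero_le_one.trans (one_le_inv_one_sub_inv (hone hp)))
    fun p hp => inv_one_sub_inv_le_exp (hone hp)

lemma prod_inv_one_sub_inv_le_mul_exp {y q r : ℕ} (hr : 1 < r)
    (hq : ∀ p ∈ q.primeFactors, p = r ∨ y ≤ p) :
    ∏ p ∈ q.primeFactors, (1 - (p : ℝ)⁻¹)⁻¹ ≤
      (1 - (r : ℝ)⁻¹)⁻¹ * Real.exp (largePrimeSum y q) := by
  have hr₁ : 1 ≤ (1 - (r : ℝ)⁻¹)⁻¹ := one_le_inv_one_sub_inv (Nat.one_lt_cast.mpr hr)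
  have hsmall : ∏ p ∈ q.primeFactors with ¬ y ≤ p, (1 - (p : ℝ)⁻¹)⁻¹ ≤ (1 - (r : ℝ)⁻¹)⁻¹ := by
    have hsub : {p ∈ q.primeFactors | ¬ y ≤ p} ⊆ {r} := fun p hp =>
      mem_singleton.mpr ((hq p (mem_filter.mp hp).1).resolve_right (mem_filter.mp hp).2)
    rcases subset_singleton_iff.mp hsub with h | h
    · rwa [h, prod_empty]
    · rw [h, prod_singleton]
  rw [← prod_filter_mul_prod_filter_not _ (y ≤ ·), mul_comm]
  exact mul_le_mul hsmall (prod_inv_one_sub_inv_le_exp_largePrimeSum y q)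
    (prod_nonneg fun p hp => zero_le_one.trans
      (one_le_inv_one_sub_inv (one_lt_cast_of_mem_primeFactors (mem_filter.mp hp).1)))
    (zero_le_one.trans hr₁)

lemma two_le_mul_exp_largePrimeSum {y q r : ℕ} (hq₀ : 0 < q) (hr : 1 < r)
    (hfactors : ∀ p ∈ q.primeFactors, p = r ∨ y ≤ p) (hq : 2 * q.totient ≤ q) :
    2 ≤ (1 - (r : ℝ)⁻¹)⁻¹ * Real.exp (largePrimeSum y q) :=
  ((two_le_prod_iff_two_mul_totient_le hq₀).mpr hq).trans
    (prod_inv_one_sub_inv_le_mul_exp hr hfactors)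

lemma eq_two_or_three_or_five_or_seven_le {p : ℕ} (hp : p.Prime) :
    p = 2 ∨ p = 3 ∨ p = 5 ∨ 7 ≤ p := by
  rcases le_or_gt 7 p with h7 | h7
  · omega
  · have hp₂ := hp.two_le
    interval_cases p <;> first | omega | norm_num at hp

lemma le_largePrimeSum_of_not_three_dvd {q : ℕ} (h2 : ¬ 2 ∣ q) (h3 : ¬ 3 ∣ q)
    (hq : 2 * q.totient ≤ q) : 0.46 ≤ largePrimeSum 7 q := by
  have hfactors : ∀ p ∈ q.primeFactors, p = 5 ∨ 7 ≤ p := fun p hp => by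
    have hdvd := Nat.dvd_of_mem_primeFactors hp
    rcases eq_two_or_three_or_five_or_seven_le (Nat.prime_of_mem_primeFactors hp)
      with rfl | rfl | h | h <;> tauto
  have hle := two_le_mul_exp_largePrimeSum (by omega) (by norm_num) hfactors hq
  have hexp : Real.exp 0.46 < 1.6 :=
    (Real.exp_bound' (by norm_num) (by norm_num) (n := 5) (by norm_num)).trans_lt
      (by norm_num [sum_range_succ, Nat.factorial])
  refine Real.exp_le_exp.mp (hexp.le.trans ?_)
  norm_num at hle ⊢
  linarith

lemma le_largePrimeSum_of_not_five_dvd {q : ℕ} (h2 : ¬ 2 ∣ q) (h5 : ¬ 5 ∣ q)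
    (hq : 2 * q.totient ≤ q) : 0.285 ≤ largePrimeSum 7 q := by
  have hfactors : ∀ p ∈ q.primeFactors, p = 3 ∨ 7 ≤ p := fun p hp => by
    have hdvd := Nat.dvd_of_mem_primeFactors hp
    rcases eq_two_or_three_or_five_or_seven_le (Nat.prime_of_mem_primeFactors hp)
      with rfl | h | rfl | h <;> tauto
  have hle := two_le_mul_exp_largePrimeSum (by omega) (by norm_num) hfactors hq
  have hexp : Real.exp 0.285 < 4 / 3 :=
    (Real.exp_bound' (by norm_num) (by norm_num) (n := 5) (by norm_num)).trans_lt
      (by norm_num [sum_range_succ, Nat.factorial])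
  refine Real.exp_le_exp.mp (hexp.le.trans ?_)
  norm_num at hle ⊢
  linarith

end LargePrimeSum

section FirstMoment

lemma card_le_div_add_one_of_mod_eq {S : Finset ℕ} {X m : ℕ} (hX : ∀ q ∈ S, q ≤ X)
    (hm : ∀ a ∈ S, ∀ b ∈ S, a % m = b % m) : (#S : ℝ) ≤ (X : ℝ) / m + 1 := by
  have hcard : #S ≤ #(range (X / m + 1)) := by
    refine card_le_card_of_injOn (· / m) (fun q hq => ?_) fun a ha b hb hab => ?_
    · simpa [Nat.lt_succ_iff] using Nat.div_le_div_right (hX q hq)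
    · rw [← Nat.mod_add_div a m, ← Nat.mod_add_div b m, hm a ha b hb, show a / m = b / m from hab]
  rw [card_range] at hcard
  calc (#S : ℝ) ≤ ((X / m + 1 : ℕ) : ℝ) := Nat.cast_le.mpr hcard
    _ ≤ (X : ℝ) / m + 1 := by push_cast; gcongr; exact Nat.cast_div_le

/-- The primes `p` with `y ≤ p < N`. -/
def primesBetween (y N : ℕ) : Finset ℕ := {p ∈ range N | p.Prime ∧ y ≤ p}

lemma one_lt_cast_of_mem_primesBetween {y N p : ℕ} (hp : p ∈ primesBetween y N) : (1 : ℝ) < p :=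
  Nat.one_lt_cast.mpr (mem_filter.mp hp).2.1.one_lt

lemma largePrimeSum_eq_sum_primesBetween (y : ℕ) {q N : ℕ} (hq : 0 < q) (hqN : q < N) :
    largePrimeSum y q = ∑ p ∈ primesBetween y N, if p ∣ q then 1 / ((p : ℝ) - 1) else 0 := by
  rw [← sum_filter, largePrimeSum]
  refine sum_congr (ext fun p => ?_) fun _ _ => rfl
  simp only [primesBetween, mem_filter, Nat.mem_primeFactors, mem_range]
  constructor
  · rintro ⟨⟨hp, hdvd, -⟩, hy⟩
    exact ⟨⟨(Nat.le_of_dvd hq hdvd).trans_lt hqN, hp, hy⟩, hdvd⟩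
  · rintro ⟨⟨-, hp, hy⟩, hdvd⟩
    exact ⟨⟨hp, hdvd, hq.ne'⟩, hy⟩

lemma card_mod_eq_and_dvd_le {m p : ℕ} (hpm : p.Coprime m) (r X : ℕ) :
    (#{q ∈ Icc 1 X | q % m = r ∧ p ∣ q} : ℝ) ≤ (X : ℝ) / m / p + 1 := by
  refine (card_le_div_add_one_of_mod_eq (X := X) (m := p * m) (fun q hq => ?_)
    fun a ha b hb => ?_).trans_eq ?_
  · exact (mem_Icc.mp (mem_filter.mp hq).1).2
  · obtain ⟨-, har, hap⟩ := mem_filter.mp ha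
    obtain ⟨-, hbr, hbp⟩ := mem_filter.mp hb
    exact (Nat.modEq_and_modEq_iff_modEq_mul hpm).mp
      ⟨(Nat.mod_eq_zero_of_dvd hap).trans (Nat.mod_eq_zero_of_dvd hbp).symm, har.trans hbr.symm⟩
  · rw [Nat.cast_mul, div_div, mul_comm (p : ℝ)]

lemma sum_one_div_sub_one_primesBetween_le (y X : ℕ) :
    ∑ p ∈ primesBetween y (X + 1), 1 / ((p : ℝ) - 1) ≤ 2 * ∑ k ∈ range X, 1 / ((k : ℝ) + 1) := by
  rw [primesBetween, sum_filter, sum_range_succ', mul_sum]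
  simp only [Nat.not_prime_zero, false_and, if_false, add_zero]
  refine sum_le_sum fun k _ => ?_
  split_ifs with hk
  · have hk₁ : (1 : ℝ) ≤ k := by exact_mod_cast Nat.le_of_succ_le_succ hk.1.two_le
    push_cast
    rw [add_sub_cancel_right, mul_one_div, div_le_div_iff₀ (by linarith) (by linarith)]
    linarith
  · positivity

lemma sum_largePrimeSum_le {m y : ℕ} (hm : ∀ p, p.Prime → y ≤ p → p.Coprime m) (r X : ℕ) :
    ∑ q ∈ Icc 1 X with q % m = r, largePrimeSum y q ≤
      (X : ℝ) / m * ∑ p ∈ primesBetween y (X + 1), 1 / ((p : ℝ) * (p - 1)) +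
        2 * ∑ k ∈ range X, 1 / ((k : ℝ) + 1) := by
  have hswap : ∑ q ∈ Icc 1 X with q % m = r, largePrimeSum y q =
      ∑ p ∈ primesBetween y (X + 1),
        (#{q ∈ Icc 1 X | q % m = r ∧ p ∣ q} : ℝ) * (1 / ((p : ℝ) - 1)) := by
    calc _ = ∑ q ∈ Icc 1 X with q % m = r, ∑ p ∈ primesBetween y (X + 1),
          if p ∣ q then 1 / ((p : ℝ) - 1) else 0 := sum_congr rfl fun q hq =>
            have hq₁ := mem_Icc.mp (mem_filter.mp hq).1
            largePrimeSum_eq_sum_primesBetween y hq₁.1 (Nat.lt_succ_of_le hq₁.2)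
      _ = _ := by
          rw [sum_comm]
          simp only [← sum_filter, filter_filter, sum_const, nsmul_eq_mul]
  calc _ ≤ ∑ p ∈ primesBetween y (X + 1), ((X : ℝ) / m / p + 1) * (1 / ((p : ℝ) - 1)) := by
        rw [hswap]
        refine sum_le_sum fun p hp => mul_le_mul_of_nonneg_right ?_ ?_
        · exact card_mod_eq_and_dvd_le (hm p (mem_filter.mp hp).2.1 (mem_filter.mp hp).2.2) r X
        · exact one_div_nonneg.mpr (sub_nonneg.mpr (one_lt_cast_of_mem_primesBetween hp).le)
    _ = (X : ℝ) / m * ∑ p ∈ primesBetween y (X + 1), 1 / ((p : ℝ) * (p - 1)) +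
          ∑ p ∈ primesBetween y (X + 1), 1 / ((p : ℝ) - 1) := by
        rw [mul_sum, ← sum_add_distrib]
        exact sum_congr rfl fun p _ => by
          rw [add_mul, one_mul, div_mul_div_comm, mul_one, mul_one_div]
    _ ≤ _ := by gcongr; exact sum_one_div_sub_one_primesBetween_le y X

lemma card_le_largePrimeSum_mul_le {m y : ℕ} (hm : ∀ p, p.Prime → y ≤ p → p.Coprime m)
    (R : Finset ℕ) (c : ℝ) (X : ℕ) :
    (#{q ∈ Icc 1 X | q % m ∈ R ∧ c ≤ largePrimeSum y q} : ℝ) * c ≤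
      #R * ((X : ℝ) / m * ∑ p ∈ primesBetween y (X + 1), 1 / ((p : ℝ) * (p - 1)) +
        2 * ∑ k ∈ range X, 1 / ((k : ℝ) + 1)) := by
  calc _ = ∑ q ∈ Icc 1 X with q % m ∈ R ∧ c ≤ largePrimeSum y q, c := by
        rw [sum_const, nsmul_eq_mul]
    _ ≤ ∑ q ∈ Icc 1 X with q % m ∈ R ∧ c ≤ largePrimeSum y q, largePrimeSum y q :=
        sum_le_sum fun q hq => (mem_filter.mp hq).2.2
    _ ≤ ∑ q ∈ Icc 1 X with q % m ∈ R, largePrimeSum y q :=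
        sum_le_sum_of_subset_of_nonneg (monotone_filter_right _ fun _ _ h => h.1)
          fun _ _ _ => largePrimeSum_nonneg y _
    _ = ∑ r ∈ R, ∑ q ∈ Icc 1 X with q % m = r, largePrimeSum y q := by
        rw [← sum_fiberwise_of_maps_to (t := R) fun q hq => (mem_filter.mp hq).2]
        refine sum_congr rfl fun r hr => ?_
        rw [filter_filter]
        exact sum_congr (filter_congr fun q _ => and_iff_right_of_imp (· ▸ hr)) fun _ _ => rfl
    _ ≤ _ := by
        rw [← nsmul_eq_mul]
        exact sum_le_card_nsmul _ _ _ fun r _ => sum_largePrimeSum_le hm r X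

end FirstMoment

section Numerics

lemma coprime_sixty_of_seven_le {p : ℕ} (hp : p.Prime) (h7 : 7 ≤ p) : p.Coprime 60 := by
  have hcoprime {r : ℕ} (hr : r.Prime) (hlt : r < 7) : p.Coprime r :=
    (Nat.coprime_primes hp hr).mpr (by omega)
  exact ((hcoprime Nat.prime_two (by norm_num)).pow_right 2).mul_right
    ((hcoprime Nat.prime_three (by norm_num)).mul_right (hcoprime Nat.prime_five (by norm_num)))

-- Telescopes over the odd integers `x`.
lemma one_div_mul_sub_one_le {x : ℝ} (hx : 3 / 2 < x) :
    1 / (x * (x - 1)) ≤ 1 / (2 * x - 3) - 1 / (2 * x + 1) := by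
  rw [div_sub_div _ _ (by linarith) (by linarith),
    div_le_div_iff₀ (by nlinarith) (mul_pos (by linarith) (by linarith))]
  nlinarith

lemma sum_primesBetween_seven_odd_le (k : ℕ) :
    ∑ p ∈ primesBetween 7 (47 + 2 * k), 1 / ((p : ℝ) * (p - 1)) ≤
      0.0532 + 1 / 91 - 1 / (91 + 4 * (k : ℝ)) := by
  simp only [primesBetween]
  induction k with
  | zero =>
    simp only [mul_zero, add_zero, sum_filter, sum_range_succ, sum_range_zero]
    norm_num
  | succ k ih =>
    have heven : ¬ (47 + 2 * k + 1).Prime := fun hp => by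
      have := hp.eq_one_or_self_of_dvd 2 (by omega)
      omega
    have hodd : 1 / (((47 + 2 * k : ℕ) : ℝ) * ((47 + 2 * k : ℕ) - 1)) ≤
        1 / (91 + 4 * (k : ℝ)) - 1 / (91 + 4 * ((k + 1 : ℕ) : ℝ)) := by
      refine (one_div_mul_sub_one_le ?_).trans_eq ?_
      · exact (by norm_num : (3 / 2 : ℝ) < 47).trans_le (by exact_mod_cast Nat.le_add_right 47 _)
      · push_cast
        ring_nf
    rw [show 47 + 2 * (k + 1) = 47 + 2 * k + 1 + 1 by ring, sum_filter, sum_range_succ,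
      sum_range_succ, ← sum_filter, if_neg (fun h : (47 + 2 * k + 1).Prime ∧ _ => heven h.1),
      add_zero]
    split_ifs
    · linarith
    · have hmono : 1 / (91 + 4 * ((k + 1 : ℕ) : ℝ)) ≤ 1 / (91 + 4 * (k : ℝ)) := by
        gcongr
        exact k.le_succ
      linarith

lemma sum_primesBetween_seven_le (N : ℕ) :
    ∑ p ∈ primesBetween 7 N, 1 / ((p : ℝ) * (p - 1)) ≤ 0.0642 := by
  calc _ ≤ ∑ p ∈ primesBetween 7 (47 + 2 * N), 1 / ((p : ℝ) * (p - 1)) := by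
        refine sum_le_sum_of_subset_of_nonneg
          (filter_subset_filter _ (range_subset_range.mpr (by omega))) fun p hp _ => ?_
        have hp₁ := one_lt_cast_of_mem_primesBetween hp
        exact one_div_nonneg.mpr (mul_nonneg (by linarith) (by linarith))
    _ ≤ 0.0532 + 1 / 91 - 1 / (91 + 4 * (N : ℝ)) := sum_primesBetween_seven_odd_le N
    _ ≤ 0.0532 + 1 / 91 := sub_le_self _ (by positivity)
    _ ≤ 0.0642 := by norm_num

lemma card_le_largePrimeSum_seven_le (R : Finset ℕ) {c : ℝ} (hc : 0 < c) (X : ℕ) :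
    (#{q ∈ Icc 1 X | q % 60 ∈ R ∧ c ≤ largePrimeSum 7 q} : ℝ) ≤
      #R * ((X : ℝ) / 60 * 0.0642 + 2 * ∑ k ∈ range X, 1 / ((k : ℝ) + 1)) / c := by
  rw [le_div_iff₀ hc]
  refine (card_le_largePrimeSum_mul_le (fun _ => coprime_sixty_of_seven_le) R c X).trans ?_
  push_cast
  gcongr
  exact sum_primesBetween_seven_le _

end Numerics

section Density

lemma filter_two_mul_totient_le_subset (X : ℕ) :
    {q ∈ Icc 1 X | q % 4 = 1 ∧ 2 * q.totient ≤ q} ⊆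
      {q ∈ Icc 1 X | q % 60 = 45} ∪
        ({q ∈ Icc 1 X | q % 60 ∈ {r ∈ range 60 | r % 4 = 1 ∧ r % 3 ≠ 0} ∧
            0.46 ≤ largePrimeSum 7 q} ∪
          {q ∈ Icc 1 X | q % 60 ∈ {r ∈ range 60 | r % 4 = 1 ∧ r % 3 = 0 ∧ r % 5 ≠ 0} ∧
            0.285 ≤ largePrimeSum 7 q}) := by
  intro q hq
  obtain ⟨hqX, hq4, htotient⟩ := mem_filter.mp hq
  simp only [mem_union, mem_filter, hqX, true_and, mem_range]
  have hodd : ¬ 2 ∣ q := by omega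
  by_cases h3 : 3 ∣ q
  · by_cases h5 : 5 ∣ q
    · exact .inl (by omega)
    · exact .inr (.inr ⟨by omega, le_largePrimeSum_of_not_five_dvd hodd h5 htotient⟩)
  · exact .inr (.inl ⟨by omega, le_largePrimeSum_of_not_three_dvd hodd h3 htotient⟩)

theorem card_two_mul_totient_le_le (X : ℕ) :
    (#{q ∈ Icc 1 X | q % 4 = 1 ∧ 2 * q.totient ≤ q} : ℝ) ≤
      0.05495 * X + 1 + 72 * ∑ k ∈ range X, 1 / ((k : ℝ) + 1) := by
  have hsum : 0 ≤ ∑ k ∈ range X, 1 / ((k : ℝ) + 1) := sum_nonneg fun k _ => by positivity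
  have hcard := (card_le_card (filter_two_mul_totient_le_subset X)).trans <|
    (card_union_le _ _).trans (Nat.add_le_add_left (card_union_le _ _) _)
  have h15 : (#{q ∈ Icc 1 X | q % 60 = 45} : ℝ) ≤ (X : ℝ) / (60 : ℕ) + 1 :=
    card_le_div_add_one_of_mod_eq (fun q hq => (mem_Icc.mp (mem_filter.mp hq).1).2)
      fun a ha b hb => (mem_filter.mp ha).2.trans (mem_filter.mp hb).2.symm
  have h3 := card_le_largePrimeSum_seven_le {r ∈ range 60 | r % 4 = 1 ∧ r % 3 ≠ 0}
    (c := 0.46) (by norm_num) X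
  have h5 := card_le_largePrimeSum_seven_le {r ∈ range 60 | r % 4 = 1 ∧ r % 3 = 0 ∧ r % 5 ≠ 0}
    (c := 0.285) (by norm_num) X
  rw [show #{r ∈ range 60 | r % 4 = 1 ∧ r % 3 ≠ 0} = 10 from rfl] at h3
  rw [show #{r ∈ range 60 | r % 4 = 1 ∧ r % 3 = 0 ∧ r % 5 ≠ 0} = 4 from rfl] at h5
  calc _ ≤ _ := by exact_mod_cast hcard
    _ ≤ _ := add_le_add h15 (add_le_add h3 h5)
    _ ≤ _ := by
      generalize ∑ k ∈ range X, 1 / ((k : ℝ) + 1) = H at hsum ⊢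
      norm_num
      linarith [X.cast_nonneg (α := ℝ)]

lemma div_four_le_card_mod_four (X : ℕ) : (X : ℝ) / 4 ≤ #{q ∈ Icc 1 X | q % 4 = 1} := by
  have hcard : #(range ((X + 3) / 4)) ≤ #{q ∈ Icc 1 X | q % 4 = 1} := by
    refine card_le_card_of_injOn (4 * · + 1) (fun k hk => ?_) fun a _ b _ hab => ?_
    · simp only [coe_range, Set.mem_Iio, coe_filter, mem_Icc, Set.mem_ofPred_eq] at hk ⊢
      omega
    · dsimp only at hab
      omega
  rw [card_range] at hcard
  rw [div_le_iff₀ (by norm_num)]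
  exact_mod_cast (by omega : X ≤ #{q ∈ Icc 1 X | q % 4 = 1} * 4)

lemma div_four_sub_le_card_of_two_mul_totient_le {P : ℕ → Prop} [DecidablePred P]
    (hP : ∀ q, 1 < q → ¬ P q → 2 * q.totient ≤ q) (X : ℕ) :
    (X : ℝ) / 4 - (0.05495 * X + 2 + 72 * ∑ k ∈ range X, 1 / ((k : ℝ) + 1)) ≤
      #{q ∈ Icc 1 X | q % 4 = 1 ∧ P q} := by
  have hsub : {q ∈ Icc 1 X | q % 4 = 1 ∧ ¬ P q} ⊆
      insert 1 {q ∈ Icc 1 X | q % 4 = 1 ∧ 2 * q.totient ≤ q} := by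
    intro q hq
    obtain ⟨hqX, hq4, hnot⟩ := mem_filter.mp hq
    rcases (mem_Icc.mp hqX).1.eq_or_lt with rfl | hlt
    · exact mem_insert_self _ _
    · exact mem_insert_of_mem (mem_filter.mpr ⟨hqX, hq4, hP q hlt hnot⟩)
  have hcompl := Nat.cast_le (α := ℝ).mpr ((card_le_card hsub).trans (card_insert_le _ _))
  have hsplit := card_filter_add_card_filter_not (s := {q ∈ Icc 1 X | q % 4 = 1}) P
  rw [filter_filter, filter_filter] at hsplit
  have hsplit' := congrArg (Nat.cast (R := ℝ)) hsplit
  push_cast at hcompl hsplit'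
  linarith [div_four_le_card_mod_four X, card_two_mul_totient_le_le X]

lemma eventually_add_mul_sum_le (a b : ℝ) {ε : ℝ} (hε : 0 < ε) :
    ∀ᶠ X : ℕ in atTop, a + b * ∑ k ∈ range X, 1 / ((k : ℝ) + 1) ≤ ε * X := by
  have hlim : Tendsto (fun X : ℕ => a * (1 / (X : ℝ)) +
      b * ((X : ℝ)⁻¹ * ∑ k ∈ range X, 1 / ((k : ℝ) + 1))) atTop (𝓝 (a * 0 + b * 0)) :=
    (tendsto_one_div_atTop_nhds_zero_nat.const_mul a).add
      (tendsto_one_div_add_atTop_nhds_zero_nat.cesaro.const_mul b)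
  have hev := hlim.eventually_le_const (show a * 0 + b * 0 < ε by simpa)
  filter_upwards [hev, eventually_gt_atTop 0] with X hX hpos
  have hX₀ : (0 : ℝ) < X := Nat.cast_pos.mpr hpos
  rw [← div_le_iff₀ hX₀]
  refine hX.trans_eq' ?_
  field_simp

lemma card_div_div_four_le (P : ℕ → Prop) [DecidablePred P] (X : ℕ) :
    (#{q ∈ Icc 1 X | P q} : ℝ) / ((X : ℝ) / 4) ≤ 4 := by
  refine div_le_of_le_mul₀ (by positivity) (by norm_num) ?_
  have hcard : (#{q ∈ Icc 1 X | P q} : ℝ) ≤ X := by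
    exact_mod_cast (card_filter_le _ _).trans_eq (Nat.card_Icc 1 X)
  linarith

end Density

open scoped Classical in
theorem erdos_true_density_78 :
    0.78 ≤ atTop.liminf (fun X : ℕ =>
      (((Finset.Icc 1 X).filter
        (fun q => q % 4 = 1 ∧ ErdosConjectureHolds q)).card : ℝ) / ((X : ℝ) / 4)) := by
  refine le_liminf_of_le (isBoundedUnder_of ⟨4, card_div_div_four_le _⟩).isCoboundedUnder_ge ?_
  have herror := eventually_add_mul_sum_le 2 72 (ε := 0.00005) (by norm_num)
  filter_upwards [herror, eventually_gt_atTop 0] with X hX hpos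
  have hcard := div_four_sub_le_card_of_two_mul_totient_le (P := ErdosConjectureHolds)
    (fun q hq hnot => two_mul_totient_le_of_erdosConjectureFalse hq (not_not.mp hnot)) X
  rw [le_div_iff₀ (div_pos (Nat.cast_pos.mpr hpos) four_pos)]
  linarith
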